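/- Theorem 1.1(ii): Let v be a classical solution of v_t = v_rr + ((m−1)/r) v_r − (b(r,t)/r²) v on [0,R] × (t1,t2) which is not identically zero and satisfies the boundary condition (1.5). Then the zero number Z(v(·,t)) is a monotone non-increasing function of t on (t1,t2); that is, for all t1 < s ≤ t < t2 one has Z(v(·,t)) ≤ Z(v(·,s)). -/

import Mathlib

open Set Filter

def SS (R t1 t2 : ℝ) : Set (ℝ × ℝ) := Icc 0 R ×ˢ Ioo t1 t2

noncomputable def Dr (S : Set (ℝ × ℝ)) (g : ℝ × ℝ → ℝ) : ℝ × ℝ → ℝ :=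
  fun p => fderivWithin ℝ g S p (1, 0)
noncomputable def Dt (S : Set (ℝ × ℝ)) (g : ℝ × ℝ → ℝ) : ℝ × ℝ → ℝ :=
  fun p => fderivWithin ℝ g S p (0, 1)

abbrev Sm (S : Set (ℝ × ℝ)) (g : ℝ × ℝ → ℝ) : Prop := ContDiffOn ℝ (⊤ : ℕ∞) g S

section calc2
variable {R t1 t2 : ℝ} {g h : ℝ × ℝ → ℝ}

lemma SS_unique (hR : 0 < R) : UniqueDiffOn ℝ (SS R t1 t2) :=
  (uniqueDiffOn_Icc hR).prod isOpen_Ioo.uniqueDiffOn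

lemma Sm.fd (hR : 0 < R) (hg : Sm (SS R t1 t2) g) (e : ℝ × ℝ) :
    Sm (SS R t1 t2) (fun p => fderivWithin ℝ g (SS R t1 t2) p e) := by
  have := hg.fderivWithin (m := (⊤ : ℕ∞)) (SS_unique hR) (by simp)
  exact this.clm_apply contDiffOn_const

lemma Sm.dr (hR : 0 < R) (hg : Sm (SS R t1 t2) g) : Sm (SS R t1 t2) (Dr (SS R t1 t2) g) :=
  hg.fd hR _
lemma Sm.dt (hR : 0 < R) (hg : Sm (SS R t1 t2) g) : Sm (SS R t1 t2) (Dt (SS R t1 t2) g) :=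
  hg.fd hR _

lemma Sm.diff {S} (hg : Sm S g) : DifferentiableOn ℝ g S :=
  hg.differentiableOn (by simp)

lemma Sm.hasDt {r t : ℝ} (hg : Sm (SS R t1 t2) g) (hr : r ∈ Icc 0 R) (ht : t ∈ Ioo t1 t2) :
    HasDerivAt (fun s => g (r, s)) (Dt (SS R t1 t2) g (r, t)) t := by
  have h1 := (hg.diff (r, t) ⟨hr, ht⟩).hasFDerivWithinAt
  have h2 : HasDerivWithinAt (fun s : ℝ => (r, s)) ((0 : ℝ), (1 : ℝ)) (Ioo t1 t2) t :=
    (hasDerivWithinAt_const _ _ _).prodMk (hasDerivWithinAt_id _ _)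
  have h3 := h1.comp_hasDerivWithinAt t h2 (fun s hs => show (r, s) ∈ SS R t1 t2 from ⟨hr, hs⟩)
  exact h3.hasDerivAt (isOpen_Ioo.mem_nhds ht)

lemma Sm.hasDrW {r t : ℝ} (hg : Sm (SS R t1 t2) g) (hr : r ∈ Icc 0 R) (ht : t ∈ Ioo t1 t2) :
    HasDerivWithinAt (fun x => g (x, t)) (Dr (SS R t1 t2) g (r, t)) (Icc 0 R) r := by
  have h1 := (hg.diff (r, t) ⟨hr, ht⟩).hasFDerivWithinAt
  have h2 : HasDerivWithinAt (fun s : ℝ => (s, t)) ((1 : ℝ), (0 : ℝ)) (Icc 0 R) r :=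
    (hasDerivWithinAt_id _ _).prodMk (hasDerivWithinAt_const _ _ _)
  exact h1.comp_hasDerivWithinAt r h2 (fun s hs => show (s, t) ∈ SS R t1 t2 from ⟨hs, ht⟩)

lemma Sm.hasDr {r t : ℝ} (hg : Sm (SS R t1 t2) g) (hr : r ∈ Ioo 0 R) (ht : t ∈ Ioo t1 t2) :
    HasDerivAt (fun x => g (x, t)) (Dr (SS R t1 t2) g (r, t)) r :=
  (hg.hasDrW ⟨hr.1.le, hr.2.le⟩ ht).hasDerivAt (Icc_mem_nhds hr.1 hr.2)

lemma Sm.comm (hR : 0 < R) (hg : Sm (SS R t1 t2) g) {p : ℝ × ℝ} (hp : p ∈ SS R t1 t2) :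
    Dr (SS R t1 t2) (Dt (SS R t1 t2) g) p
      = Dt (SS R t1 t2) (Dr (SS R t1 t2) g) p := by
  have hu := SS_unique (t1 := t1) (t2 := t2) hR
  have hcl : p ∈ closure (interior (SS R t1 t2)) := by
    have : interior (SS R t1 t2) = Ioo 0 R ×ˢ Ioo t1 t2 := by
      rw [SS, interior_prod_eq, interior_Icc, interior_Ioo]
    rw [this, closure_prod_eq, closure_Ioo hR.ne]
    exact ⟨hp.1, subset_closure hp.2⟩
  have hs : IsSymmSndFDerivWithinAt ℝ g (SS R t1 t2) p :=
    (hg p hp).isSymmSndFDerivWithinAt (by simp only [minSmoothness_of_isRCLikeNormedField]; exact WithTop.coe_le_coe.2 (le_top : (2 : ℕ∞) ≤ ⊤)) hu hcl hp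
  have hd : DifferentiableWithinAt ℝ (fderivWithin ℝ g (SS R t1 t2)) (SS R t1 t2) p :=
    (hg.fderivWithin (m := (⊤ : ℕ∞)) hu (by simp)).differentiableOn (by simp) p hp
  have key : ∀ e e' : ℝ × ℝ,
      fderivWithin ℝ (fun q => fderivWithin ℝ g (SS R t1 t2) q e) (SS R t1 t2) p e'
      = fderivWithin ℝ (fderivWithin ℝ g (SS R t1 t2)) (SS R t1 t2) p e' e := by
    intro e e'
    rw [fderivWithin_clm_apply (hu p hp) hd (differentiableWithinAt_const _)]
    simp
  unfold Dr Dt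
  rw [key, key]
  exact hs.eq _ _

lemma Sm.cont {S} (hg : Sm S g) : ContinuousOn g S := hg.continuousOn

/-- bounded on compact time intervals -/
lemma Sm.bdd (hg : Sm (SS R t1 t2) g) {a b : ℝ} (ha : t1 < a) (hb : b < t2) :
    ∃ C, 0 < C ∧ ∀ r ∈ Icc 0 R, ∀ t ∈ Icc a b, |g (r, t)| ≤ C := by
  have hc : IsCompact (Icc 0 R ×ˢ Icc a b : Set (ℝ × ℝ)) := isCompact_Icc.prod isCompact_Icc
  obtain ⟨C, hC⟩ := hc.exists_bound_of_continuousOn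
    (hg.cont.mono (fun p hp => ⟨hp.1, ha.trans_le hp.2.1, hp.2.2.trans_lt hb⟩))
  exact ⟨max C 1, by positivity, fun r hr t ht => (hC (r, t) ⟨hr, ht⟩).trans (le_max_left _ _)⟩

lemma mvt_r {f f' : ℝ → ℝ} {C : ℝ} {s : Set ℝ} (hs : Convex ℝ s)
    (hd : ∀ x ∈ s, HasDerivWithinAt f (f' x) s x)
    (hb : ∀ x ∈ s, |f' x| ≤ C) {x y : ℝ} (hx : x ∈ s) (hy : y ∈ s) :
    |f y - f x| ≤ C * |y - x| :=
  hs.norm_image_sub_le_of_norm_hasDerivWithin_le hd hb hx hy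

end calc2

section core
open MeasureTheory Topology

/-- continuous and bounded on the open interval -/
def BC (R : ℝ) (φ : ℝ → ℝ) : Prop :=
  ContinuousOn φ (Ioo 0 R) ∧ ∃ B, ∀ r ∈ Ioo 0 R, |φ r| ≤ B

namespace BC
variable {R : ℝ} {φ ψ : ℝ → ℝ}
lemma add (h : BC R φ) (k : BC R ψ) : BC R (fun r => φ r + ψ r) := by
  obtain ⟨h1, B, h2⟩ := h
  obtain ⟨k1, D, k2⟩ := k
  exact ⟨h1.add k1, B + D, fun r hr => (abs_add_le _ _).trans (add_le_add (h2 r hr) (k2 r hr))⟩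
lemma neg (h : BC R φ) : BC R (fun r => - φ r) := by
  obtain ⟨h1, B, h2⟩ := h
  exact ⟨h1.neg, B, fun r hr => by rw [abs_neg]; exact h2 r hr⟩
lemma sub (h : BC R φ) (k : BC R ψ) : BC R (fun r => φ r - ψ r) := by
  simpa [sub_eq_add_neg] using h.add k.neg
lemma mul (h : BC R φ) (k : BC R ψ) : BC R (fun r => φ r * ψ r) := by
  obtain ⟨h1, B, h2⟩ := h
  obtain ⟨k1, D, k2⟩ := k
  refine ⟨h1.mul k1, B * D, fun r hr => ?_⟩
  rw [abs_mul]
  exact mul_le_mul (h2 r hr) (k2 r hr) (abs_nonneg _) ((abs_nonneg _).trans (h2 r hr))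
lemma const (c : ℝ) : BC R (fun _ => c) := ⟨continuousOn_const, |c|, fun _ _ => le_rfl⟩
lemma sq (h : BC R φ) : BC R (fun r => φ r ^ 2) := by simpa [pow_two] using h.mul h
lemma of_cont (h : Continuous φ) : BC R φ := by
  obtain ⟨C, hC⟩ := (isCompact_Icc (a := (0:ℝ)) (b := R)).exists_bound_of_continuousOn h.continuousOn
  exact ⟨h.continuousOn, C, fun r hr => hC r ⟨hr.1.le, hr.2.le⟩⟩
lemma congr (h : BC R φ) (e : ∀ r ∈ Ioo 0 R, ψ r = φ r) : BC R ψ := by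
  obtain ⟨h1, B, h2⟩ := h
  exact ⟨h1.congr e, B, fun r hr => by rw [e r hr]; exact h2 r hr⟩
lemma int (h : BC R φ) : IntegrableOn φ (Ioo 0 R) volume := by
  obtain ⟨h1, B, h2⟩ := h
  refine Integrable.of_bound (h1.aestronglyMeasurable measurableSet_Ioo) B ?_
  filter_upwards [ae_restrict_mem measurableSet_Ioo] with r hr using h2 r hr
end BC

lemma diff_int {R τ T B : ℝ} {φ φ' : ℝ → ℝ → ℝ} (hτ : τ ∈ Ioo 0 T)
    (hc : ∀ σ ∈ Ioo 0 T, BC R (fun r => φ r σ))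
    (hc' : BC R (fun r => φ' r τ))
    (hb : ∀ r ∈ Ioo 0 R, ∀ σ ∈ Ioo (τ / 2) T, |φ' r σ| ≤ B)
    (hd : ∀ r ∈ Ioo 0 R, ∀ σ ∈ Ioo 0 T, HasDerivAt (fun s => φ r s) (φ' r σ) σ) :
    HasDerivAt (fun σ => ∫ r in Ioo 0 R, φ r σ) (∫ r in Ioo 0 R, φ' r τ) τ := by
  have hs : Ioo (τ / 2) T ∈ 𝓝 τ := Ioo_mem_nhds (by linarith [hτ.1]) hτ.2
  refine (hasDerivAt_integral_of_dominated_loc_of_deriv_le (F := fun σ r => φ r σ)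
    (F' := fun σ r => φ' r σ) (bound := fun _ => B) hs ?_ ?_ ?_ ?_ ?_ ?_).2
  · filter_upwards [isOpen_Ioo.mem_nhds hτ] with σ hσ
    exact (hc σ hσ).int.aestronglyMeasurable
  · exact (hc τ hτ).int
  · exact hc'.int.aestronglyMeasurable
  · filter_upwards [ae_restrict_mem measurableSet_Ioo] with r hr σ hσ using hb r hr σ hσ
  · exact (BC.const B).int
  · filter_upwards [ae_restrict_mem measurableSet_Ioo] with r hr σ hσ
    exact hd r hr σ ⟨by linarith [hσ.1, hτ.1], hσ.2⟩

lemma ftc_open {R a b : ℝ} (hR : 0 < R) {F F' : ℝ → ℝ}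
    (hd : ∀ r ∈ Ioo 0 R, HasDerivAt F (F' r) r) (hF : BC R F')
    (h0 : Tendsto F (𝓝[>] 0) (𝓝 a)) (h1 : Tendsto F (𝓝[<] R) (𝓝 b)) :
    ∫ r in Ioo 0 R, F' r = b - a := by
  rw [← integral_Ioc_eq_integral_Ioo, ← intervalIntegral.integral_of_le hR.le]
  refine intervalIntegral.integral_eq_sub_of_hasDerivAt_of_tendsto hR hd ?_ h0 h1
  rw [intervalIntegrable_iff_integrableOn_Ioo_of_le hR.le]
  exact hF.int

structure UD (R T κ r0 C : ℝ) (u ur urr ut urt : ℝ → ℝ → ℝ) : Prop where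
  hR : 0 < R
  hκ : 0 < κ
  hr0 : r0 ∈ Icc 0 R
  hC : 0 < C
  d_r : ∀ r ∈ Ioo 0 R, ∀ τ ∈ Ioo 0 T, HasDerivAt (fun x => u x τ) (ur r τ) r
  d_rr : ∀ r ∈ Ioo 0 R, ∀ τ ∈ Ioo 0 T, HasDerivAt (fun x => ur x τ) (urr r τ) r
  d_tr : ∀ r ∈ Ioo 0 R, ∀ τ ∈ Ioo 0 T, HasDerivAt (fun x => ut x τ) (urt r τ) r
  d_t : ∀ r ∈ Ioo 0 R, ∀ τ ∈ Ioo 0 T, HasDerivAt (fun s => u r s) (ut r τ) τ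
  d_rt : ∀ r ∈ Ioo 0 R, ∀ τ ∈ Ioo 0 T, HasDerivAt (fun s => ur r s) (urt r τ) τ
  c_rr : ∀ τ ∈ Ioo 0 T, ContinuousOn (fun r => urr r τ) (Ioo 0 R)
  c_rt : ∀ τ ∈ Ioo 0 T, ContinuousOn (fun r => urt r τ) (Ioo 0 R)
  b_u : ∀ r ∈ Ioo 0 R, ∀ τ ∈ Ioo 0 T, |u r τ| ≤ C * r * √r
  b_ut : ∀ r ∈ Ioo 0 R, ∀ τ ∈ Ioo 0 T, |ut r τ| ≤ C * r * √r
  b_ur : ∀ r ∈ Ioo 0 R, ∀ τ ∈ Ioo 0 T, |ur r τ| ≤ C * √r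
  b_urt : ∀ r ∈ Ioo 0 R, ∀ τ ∈ Ioo 0 T, |urt r τ| ≤ C * √r
  pde : ∀ r ∈ Ioo 0 R, ∀ τ ∈ Ioo 0 T,
    (ut r τ + urr r τ - κ / r ^ 2 * u r τ) ^ 2 ≤ C * (ur r τ ^ 2 + κ * (u r τ / r) ^ 2)
  l_u : ∀ τ ∈ Ioo 0 T, Tendsto (fun r => u r τ) (𝓝[<] R) (𝓝 0)
  l_ut : ∀ τ ∈ Ioo 0 T, Tendsto (fun r => ut r τ) (𝓝[<] R) (𝓝 0)
  l_ur : ∀ τ ∈ Ioo 0 T, ∃ L, Tendsto (fun r => ur r τ) (𝓝[<] R) (𝓝 L)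

noncomputable def ww (r0 r τ : ℝ) : ℝ := Real.exp (-(r - r0) ^ 2 / (4 * τ))

lemma ww_dr (r0 r τ : ℝ) (hτ : 0 < τ) :
    HasDerivAt (fun x => ww r0 x τ) (-(r - r0) / (2 * τ) * ww r0 r τ) r := by
  unfold ww
  have : HasDerivAt (fun x => -(x - r0) ^ 2 / (4 * τ)) (-(r - r0) / (2 * τ)) r := by
    have := ((((hasDerivAt_id r).sub_const r0).pow 2).neg).div_const (4 * τ)
    refine this.congr_deriv ?_
    simp; field_simp; ring
  simpa [mul_comm] using this.exp

lemma ww_dt (r0 r τ : ℝ) (hτ : 0 < τ) :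
    HasDerivAt (fun s => ww r0 r s) ((r - r0) ^ 2 / (4 * τ ^ 2) * ww r0 r τ) τ := by
  unfold ww
  have : HasDerivAt (fun s => -(r - r0) ^ 2 / (4 * s)) ((r - r0) ^ 2 / (4 * τ ^ 2)) τ := by
    have := (hasDerivAt_const τ (-(r - r0) ^ 2)).div ((hasDerivAt_id τ).const_mul 4) (by simp; exact hτ.ne')
    refine this.congr_deriv ?_
    simp; field_simp
  simpa [mul_comm] using this.exp

lemma ww_cont (r0 τ : ℝ) : Continuous (fun x => ww r0 x τ) := by
  unfold ww; fun_prop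
lemma ww_pos (r0 r τ : ℝ) : 0 < ww r0 r τ := Real.exp_pos _
lemma ww_le (r0 r τ : ℝ) (hτ : 0 < τ) : ww r0 r τ ≤ 1 := by
  unfold ww; rw [Real.exp_le_one_iff]
  apply div_nonpos_of_nonpos_of_nonneg <;> nlinarith [sq_nonneg (r - r0)]

end core

section core2
open MeasureTheory Topology

variable {R T κ r0 C : ℝ} {u ur urr ut urt : ℝ → ℝ → ℝ}

namespace UD

lemma sqrt_bd (r : ℝ) (hr : r ∈ Ioo 0 R) : √r ≤ √R := Real.sqrt_le_sqrt hr.2.le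

/-- a uniform bound -/
lemma unif (D : UD R T κ r0 C u ur urr ut urt) : ∃ B, 0 < B ∧ ∀ r ∈ Ioo 0 R, ∀ τ ∈ Ioo 0 T,
    |u r τ| ≤ B ∧ |ut r τ| ≤ B ∧ |ur r τ| ≤ B ∧ |urt r τ| ≤ B ∧ |u r τ / r| ≤ B ∧ |ut r τ / r| ≤ B := by
  have hC := D.hC
  have hR := D.hR
  have hRs : 0 < √R := Real.sqrt_pos.2 hR
  refine ⟨C * (R + 1) * √R, by positivity, fun r hr τ hτ => ?_⟩
  have h1 := sqrt_bd r hr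
  have h0 : 0 < √r := Real.sqrt_pos.2 hr.1
  have hr0 := hr.1
  have hrR := hr.2.le
  have e1 : C * r * √r ≤ C * (R + 1) * √R := by
    gcongr; linarith
  have e2 : C * √r ≤ C * (R + 1) * √R := by
    have : C * √r ≤ C * √R := by gcongr
    nlinarith [mul_pos (mul_pos hC hR) hRs]
  have e3 : ∀ y : ℝ, |y| ≤ C * r * √r → |y / r| ≤ C * (R + 1) * √R := by
    intro y hy
    rw [abs_div, abs_of_pos hr0, div_le_iff₀ hr0]
    refine hy.trans ?_
    nlinarith
  exact ⟨(D.b_u r hr τ hτ).trans e1, (D.b_ut r hr τ hτ).trans e1, (D.b_ur r hr τ hτ).trans e2,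
    (D.b_urt r hr τ hτ).trans e2, e3 _ (D.b_u r hr τ hτ), e3 _ (D.b_ut r hr τ hτ)⟩

lemma cinv : ContinuousOn (fun r : ℝ => r⁻¹) (Ioo 0 R) :=
  continuousOn_inv₀.mono (fun _ hr => ne_of_gt hr.1)

section fixed
variable {τ : ℝ} (D : UD R T κ r0 C u ur urr ut urt) (hτ : τ ∈ Ioo 0 T)
include D hτ

lemma bc_u : BC R (fun r => u r τ) := by
  obtain ⟨B, -, hB⟩ := D.unif
  exact ⟨fun r hr => (D.d_r r hr τ hτ).continuousAt.continuousWithinAt, B,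
    fun r hr => (hB r hr τ hτ).1⟩
lemma bc_ut : BC R (fun r => ut r τ) := by
  obtain ⟨B, -, hB⟩ := D.unif
  exact ⟨fun r hr => (D.d_tr r hr τ hτ).continuousAt.continuousWithinAt, B,
    fun r hr => (hB r hr τ hτ).2.1⟩
lemma bc_ur : BC R (fun r => ur r τ) := by
  obtain ⟨B, -, hB⟩ := D.unif
  exact ⟨fun r hr => (D.d_rr r hr τ hτ).continuousAt.continuousWithinAt, B,
    fun r hr => (hB r hr τ hτ).2.2.1⟩
lemma bc_urt : BC R (fun r => urt r τ) := by
  obtain ⟨B, -, hB⟩ := D.unif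
  exact ⟨D.c_rt τ hτ, B, fun r hr => (hB r hr τ hτ).2.2.2.1⟩
lemma bc_q : BC R (fun r => u r τ / r) := by
  obtain ⟨B, -, hB⟩ := D.unif
  exact ⟨((D.bc_u hτ).1.mul cinv).congr (fun r _ => div_eq_mul_inv _ _), B,
    fun r hr => (hB r hr τ hτ).2.2.2.2.1⟩
lemma bc_qt : BC R (fun r => ut r τ / r) := by
  obtain ⟨B, -, hB⟩ := D.unif
  exact ⟨((D.bc_ut hτ).1.mul cinv).congr (fun r _ => div_eq_mul_inv _ _), B,
    fun r hr => (hB r hr τ hτ).2.2.2.2.2⟩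
lemma bc_c : BC R (fun r => u r τ ^ 2 / r ^ 3) := by
  refine ⟨?_, C ^ 2, fun r hr => ?_⟩
  · have := ((D.bc_u hτ).1.pow 2).mul ((cinv (R := R)).pow 3)
    refine this.congr (fun r hr => ?_)
    simp [div_eq_mul_inv]
  · have h0 := hr.1
    rw [abs_of_nonneg (by positivity), div_le_iff₀ (by positivity), ← sq_abs]
    calc |u r τ| ^ 2 ≤ (C * r * √r) ^ 2 := by
          gcongr; exact D.b_u r hr τ hτ
      _ = C ^ 2 * r ^ 3 := by
          rw [mul_pow, Real.sq_sqrt h0.le]; ring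
lemma bc_f : BC R (fun r => ut r τ + urr r τ - κ / r ^ 2 * u r τ) := by
  have hb : BC R (fun r => C * (ur r τ ^ 2 + κ * (u r τ / r) ^ 2)) :=
    (BC.const C).mul ((D.bc_ur hτ).sq.add ((BC.const κ).mul (D.bc_q hτ).sq))
  obtain ⟨-, B, hB⟩ := hb
  refine ⟨?_, √B, fun r hr => ?_⟩
  · refine ((D.bc_ut hτ).1.add (D.c_rr τ hτ)).sub (ContinuousOn.mul ?_ (D.bc_u hτ).1)
    refine (((cinv (R := R)).pow 2).const_smul κ).congr (fun r hr => ?_)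
    simp [div_eq_mul_inv]
  · refine Real.abs_le_sqrt ((D.pde r hr τ hτ).trans ((le_abs_self _).trans (hB r hr)))
omit D hτ in
lemma bc_w (τ : ℝ) : BC R (fun r => ww r0 r τ) := BC.of_cont (ww_cont _ _)
omit D hτ in
lemma bc_x (τ : ℝ) : BC R (fun r => (r - r0) / (2 * τ)) := BC.of_cont (by fun_prop)

lemma t0_u : Tendsto (fun r => u r τ) (𝓝[>] 0) (𝓝 0) := by
  have h : Tendsto (fun r : ℝ => C * r * √r) (𝓝[>] 0) (𝓝 0) := by
    have : Continuous (fun r : ℝ => C * r * √r) := by fun_prop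
    simpa using (this.tendsto 0).mono_left nhdsWithin_le_nhds
  refine squeeze_zero_norm' ?_ h
  filter_upwards [Ioo_mem_nhdsGT D.hR] with r hr using D.b_u r hr τ hτ
lemma t0_ut : Tendsto (fun r => ut r τ) (𝓝[>] 0) (𝓝 0) := by
  have h : Tendsto (fun r : ℝ => C * r * √r) (𝓝[>] 0) (𝓝 0) := by
    have : Continuous (fun r : ℝ => C * r * √r) := by fun_prop
    simpa using (this.tendsto 0).mono_left nhdsWithin_le_nhds
  refine squeeze_zero_norm' ?_ h
  filter_upwards [Ioo_mem_nhdsGT D.hR] with r hr using D.b_ut r hr τ hτ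
omit D hτ in
lemma t0_sq : Tendsto (fun r : ℝ => C * √r) (𝓝[>] 0) (𝓝 0) := by
  have : Continuous (fun r : ℝ => C * √r) := by fun_prop
  simpa using (this.tendsto 0).mono_left nhdsWithin_le_nhds
lemma t0_ur : Tendsto (fun r => ur r τ) (𝓝[>] 0) (𝓝 0) := by
  refine squeeze_zero_norm' ?_ (t0_sq (C := C))
  filter_upwards [Ioo_mem_nhdsGT D.hR] with r hr using D.b_ur r hr τ hτ
lemma t0_q : Tendsto (fun r => u r τ / r) (𝓝[>] 0) (𝓝 0) := by
  refine squeeze_zero_norm' ?_ (t0_sq (C := C))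
  filter_upwards [Ioo_mem_nhdsGT D.hR] with r hr
  rw [Real.norm_eq_abs, abs_div, abs_of_pos hr.1, div_le_iff₀ hr.1]
  linarith [D.b_u r hr τ hτ]
lemma tR_q : Tendsto (fun r => u r τ / r) (𝓝[<] R) (𝓝 0) := by
  have := (D.l_u τ hτ).div (tendsto_id.mono_left nhdsWithin_le_nhds) D.hR.ne'
  rw [zero_div] at this
  exact this

end fixed

end UD
end core2

section core3
open MeasureTheory Topology

variable {R T κ r0 C : ℝ} {u ur urr ut urt : ℝ → ℝ → ℝ}

noncomputable def HH (R r0 : ℝ) (u : ℝ → ℝ → ℝ) (τ : ℝ) : ℝ :=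
  ∫ r in Ioo 0 R, u r τ ^ 2 * ww r0 r τ
noncomputable def II (R r0 κ : ℝ) (u ur : ℝ → ℝ → ℝ) (τ : ℝ) : ℝ :=
  ∫ r in Ioo 0 R, (ur r τ ^ 2 + κ * (u r τ / r) ^ 2) * ww r0 r τ
noncomputable def ff (κ : ℝ) (u urr ut : ℝ → ℝ → ℝ) (r τ : ℝ) : ℝ :=
  ut r τ + urr r τ - κ / r ^ 2 * u r τ
noncomputable def AA (κ r0 : ℝ) (u ur urr : ℝ → ℝ → ℝ) (r τ : ℝ) : ℝ :=
  -urr r τ + (r - r0) / (2 * τ) * ur r τ + κ / r ^ 2 * u r τ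

namespace UD
section fixed
variable {τ : ℝ} (D : UD R T κ r0 C u ur urr ut urt) (hτ : τ ∈ Ioo 0 T)
include D hτ

lemma bc_ff : BC R (fun r => ff κ u urr ut r τ) := D.bc_f hτ
lemma bc_A : BC R (fun r => AA κ r0 u ur urr r τ) := by
  refine (((D.bc_ut hτ).add ((bc_x (r0 := r0) τ).mul (D.bc_ur hτ))).sub (D.bc_ff hτ)).congr (fun r hr => ?_)
  simp only [AA, ff]; ring

lemma dH0 : HasDerivAt (HH R r0 u)
    (∫ r in Ioo 0 R, (2 * u r τ * ut r τ + u r τ ^ 2 * ((r - r0) ^ 2 / (4 * τ ^ 2))) * ww r0 r τ) τ := by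
  obtain ⟨B, hB0, hB⟩ := D.unif
  have hτ0 := hτ.1
  refine diff_int (B := 2 * B * B + B ^ 2 * (R ^ 2 / τ ^ 2)) (φ := fun r τ => u r τ ^ 2 * ww r0 r τ)
    (φ' := fun r τ => (2 * u r τ * ut r τ + u r τ ^ 2 * ((r - r0) ^ 2 / (4 * τ ^ 2))) * ww r0 r τ)
    hτ (fun σ hσ => (D.bc_u hσ).sq.mul (bc_w σ)) ?_ ?_ ?_
  · exact ((((BC.const 2).mul (D.bc_u hτ)).mul (D.bc_ut hτ)).add
      ((D.bc_u hτ).sq.mul (BC.of_cont (by fun_prop)))).mul (bc_w τ)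
  · intro r hr σ hσ
    have hσ' : σ ∈ Ioo 0 T := ⟨by linarith [hσ.1], hσ.2⟩
    obtain ⟨h1, h2, -⟩ := hB r hr σ hσ'
    have h3 : (r - r0) ^ 2 / (4 * σ ^ 2) ≤ R ^ 2 / τ ^ 2 := by
      apply div_le_div₀ (by positivity) _ (by positivity) _
      · apply sq_le_sq'
        · linarith [hr.1, hr.2, D.hr0.1, D.hr0.2]
        · linarith [hr.1, hr.2, D.hr0.1, D.hr0.2]
      · nlinarith [hσ.1]
    rw [abs_mul, abs_of_pos (ww_pos _ _ _)]
    have h4 : |2 * u r σ * ut r σ + u r σ ^ 2 * ((r - r0) ^ 2 / (4 * σ ^ 2))| ≤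
        2 * B * B + B ^ 2 * (R ^ 2 / τ ^ 2) := by
      refine (abs_add_le _ _).trans (add_le_add ?_ ?_)
      · rw [abs_mul, abs_mul, abs_two]; gcongr
      · rw [abs_mul, abs_pow, abs_of_nonneg (a := (r - r0) ^ 2 / (4 * σ ^ 2)) (by positivity)]; gcongr
    calc _ ≤ (2 * B * B + B ^ 2 * (R ^ 2 / τ ^ 2)) * 1 := by
          exact mul_le_mul h4 (ww_le _ _ _ hσ'.1) (ww_pos _ _ _).le (by positivity)
      _ = _ := mul_one _
  · intro r hr σ hσ
    refine (((D.d_t r hr σ hσ).pow 2).mul (ww_dt r0 r σ hσ.1)).congr_deriv ?_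
    simp only [Pi.pow_apply]; ring

lemma dI0 : HasDerivAt (II R r0 κ u ur)
    (∫ r in Ioo 0 R, (2 * ur r τ * urt r τ + κ * (2 * (u r τ / r) * (ut r τ / r))
      + (ur r τ ^ 2 + κ * (u r τ / r) ^ 2) * ((r - r0) ^ 2 / (4 * τ ^ 2))) * ww r0 r τ) τ := by
  obtain ⟨B, hB0, hB⟩ := D.unif
  have hτ0 := hτ.1
  have hκ := D.hκ
  refine diff_int (B := 2 * B * B + κ * (2 * B * B) + (B ^ 2 + κ * B ^ 2) * (R ^ 2 / τ ^ 2))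
    (φ := fun r τ => (ur r τ ^ 2 + κ * (u r τ / r) ^ 2) * ww r0 r τ)
    (φ' := fun r τ => (2 * ur r τ * urt r τ + κ * (2 * (u r τ / r) * (ut r τ / r))
      + (ur r τ ^ 2 + κ * (u r τ / r) ^ 2) * ((r - r0) ^ 2 / (4 * τ ^ 2))) * ww r0 r τ)
    hτ (fun σ hσ => ((D.bc_ur hσ).sq.add ((BC.const κ).mul (D.bc_q hσ).sq)).mul (bc_w σ)) ?_ ?_ ?_
  · exact (((((BC.const 2).mul (D.bc_ur hτ)).mul (D.bc_urt hτ)).add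
      ((BC.const κ).mul (((BC.const 2).mul (D.bc_q hτ)).mul (D.bc_qt hτ)))).add
      (((D.bc_ur hτ).sq.add ((BC.const κ).mul (D.bc_q hτ).sq)).mul (BC.of_cont (by fun_prop)))).mul (bc_w τ)
  · intro r hr σ hσ
    have hσ' : σ ∈ Ioo 0 T := ⟨by linarith [hσ.1], hσ.2⟩
    obtain ⟨h1, h2, h5, h6, h7, h8⟩ := hB r hr σ hσ'
    have h3 : (r - r0) ^ 2 / (4 * σ ^ 2) ≤ R ^ 2 / τ ^ 2 := by
      apply div_le_div₀ (by positivity) _ (by positivity) _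
      · apply sq_le_sq'
        · linarith [hr.1, hr.2, D.hr0.1, D.hr0.2]
        · linarith [hr.1, hr.2, D.hr0.1, D.hr0.2]
      · nlinarith [hσ.1]
    rw [abs_mul, abs_of_pos (ww_pos _ _ _)]
    have h4 : |2 * ur r σ * urt r σ + κ * (2 * (u r σ / r) * (ut r σ / r))
      + (ur r σ ^ 2 + κ * (u r σ / r) ^ 2) * ((r - r0) ^ 2 / (4 * σ ^ 2))| ≤
        2 * B * B + κ * (2 * B * B) + (B ^ 2 + κ * B ^ 2) * (R ^ 2 / τ ^ 2) := by
      refine (abs_add_le _ _).trans (add_le_add ((abs_add_le _ _).trans (add_le_add ?_ ?_)) ?_)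
      · rw [abs_mul, abs_mul, abs_two]; gcongr
      · rw [abs_mul, abs_mul, abs_mul, abs_two, abs_of_pos hκ]; gcongr
      · rw [abs_mul, abs_of_nonneg (a := (r - r0) ^ 2 / (4 * σ ^ 2)) (by positivity),
          abs_of_nonneg (by positivity), ← sq_abs (ur r σ), ← sq_abs (u r σ / r)]; gcongr
    calc _ ≤ (2 * B * B + κ * (2 * B * B) + (B ^ 2 + κ * B ^ 2) * (R ^ 2 / τ ^ 2)) * 1 := by
          exact mul_le_mul h4 (ww_le _ _ _ hσ'.1) (ww_pos _ _ _).le (by positivity)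
      _ = _ := mul_one _
  · intro r hr σ hσ
    have := ((((D.d_rt r hr σ hσ).pow 2).add ((((D.d_t r hr σ hσ).div_const r).pow 2).const_mul κ)).mul
      (ww_dt r0 r σ hσ.1))
    refine this.congr_deriv ?_
    simp only [Pi.pow_apply, Pi.add_apply]; ring

end fixed
end UD
end core3

section core4
open MeasureTheory Topology

variable {R T κ r0 C : ℝ} {u ur urr ut urt : ℝ → ℝ → ℝ}

lemma BC.lin4 {R : ℝ} {a b c d : ℝ → ℝ} (ha : BC R a) (hb : BC R b) (hc : BC R c) (hd : BC R d)
    (β γ δ : ℝ) : ∫ r in Ioo 0 R, (a r + β * b r + γ * c r + δ * d r) =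
      (∫ r in Ioo 0 R, a r) + β * (∫ r in Ioo 0 R, b r) + γ * (∫ r in Ioo 0 R, c r)
        + δ * (∫ r in Ioo 0 R, d r) := by
  have hb' := ((BC.const β).mul hb)
  have hc' := ((BC.const γ).mul hc)
  have hd' := ((BC.const δ).mul hd)
  rw [integral_add ((ha.add hb').add hc').int hd'.int, integral_add (ha.add hb').int hc'.int,
    integral_add ha.int hb'.int, integral_const_mul, integral_const_mul, integral_const_mul]

namespace UD
section fixed
variable {τ : ℝ} (D : UD R T κ r0 C u ur urr ut urt) (hτ : τ ∈ Ioo 0 T)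
include D hτ

lemma bc_uw : BC R (fun r => u r τ ^ 2 * ww r0 r τ) := (D.bc_u hτ).sq.mul (bc_w τ)
lemma bc_ew : BC R (fun r => (ur r τ ^ 2 + κ * (u r τ / r) ^ 2) * ww r0 r τ) :=
  ((D.bc_ur hτ).sq.add ((BC.const κ).mul (D.bc_q hτ).sq)).mul (bc_w τ)
lemma bc_ufw : BC R (fun r => u r τ * ff κ u urr ut r τ * ww r0 r τ) :=
  ((D.bc_u hτ).mul (D.bc_ff hτ)).mul (bc_w τ)
lemma bc_uAw : BC R (fun r => u r τ * AA κ r0 u ur urr r τ * ww r0 r τ) :=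
  ((D.bc_u hτ).mul (D.bc_A hτ)).mul (bc_w τ)
lemma bc_fAw : BC R (fun r => ff κ u urr ut r τ * AA κ r0 u ur urr r τ * ww r0 r τ) :=
  ((D.bc_ff hτ).mul (D.bc_A hτ)).mul (bc_w τ)
lemma bc_AAw : BC R (fun r => AA κ r0 u ur urr r τ ^ 2 * ww r0 r τ) :=
  (D.bc_A hτ).sq.mul (bc_w τ)
lemma bc_ffw : BC R (fun r => ff κ u urr ut r τ ^ 2 * ww r0 r τ) :=
  (D.bc_ff hτ).sq.mul (bc_w τ)
lemma bc_cw : BC R (fun r => u r τ ^ 2 / r ^ 3 * ww r0 r τ) :=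
  (D.bc_c hτ).mul (bc_w τ)
lemma bc_dH : BC R (fun r => (2 * u r τ * ut r τ + u r τ ^ 2 * ((r - r0) ^ 2 / (4 * τ ^ 2))) * ww r0 r τ) :=
  ((((BC.const 2).mul (D.bc_u hτ)).mul (D.bc_ut hτ)).add
      ((D.bc_u hτ).sq.mul (BC.of_cont (by fun_prop)))).mul (bc_w τ)
lemma bc_dI : BC R (fun r => (2 * ur r τ * urt r τ + κ * (2 * (u r τ / r) * (ut r τ / r))
      + (ur r τ ^ 2 + κ * (u r τ / r) ^ 2) * ((r - r0) ^ 2 / (4 * τ ^ 2))) * ww r0 r τ) :=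
  (((((BC.const 2).mul (D.bc_ur hτ)).mul (D.bc_urt hτ)).add
      ((BC.const κ).mul (((BC.const 2).mul (D.bc_q hτ)).mul (D.bc_qt hτ)))).add
      (((D.bc_ur hτ).sq.add ((BC.const κ).mul (D.bc_q hτ).sq)).mul (BC.of_cont (by fun_prop)))).mul (bc_w τ)

omit D hτ in
lemma tw (a : ℝ) (l : Filter ℝ) (hl : l ≤ 𝓝 a) :
    Tendsto (fun r => ww r0 r τ) l (𝓝 (ww r0 a τ)) := ((ww_cont r0 τ).tendsto a).mono_left hl
omit D hτ in
lemma tx (a : ℝ) (l : Filter ℝ) (hl : l ≤ 𝓝 a) :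
    Tendsto (fun r => (r - r0) / (2 * τ)) l (𝓝 ((a - r0) / (2 * τ))) := by
  have : Continuous (fun r => (r - r0) / (2 * τ)) := by fun_prop
  exact (this.tendsto a).mono_left hl

lemma uA : ∫ r in Ioo 0 R, u r τ * AA κ r0 u ur urr r τ * ww r0 r τ = II R r0 κ u ur τ := by
  have hτ0 := hτ.1
  obtain ⟨L, hL⟩ := D.l_ur τ hτ
  have key := ftc_open (F := fun r => u r τ * ur r τ * ww r0 r τ)
    (F' := fun r => (ur r τ ^ 2 + κ * (u r τ / r) ^ 2) * ww r0 r τ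
      - u r τ * AA κ r0 u ur urr r τ * ww r0 r τ) (a := 0) (b := 0) D.hR ?_
      ((D.bc_ew hτ).sub (D.bc_uAw hτ)) ?_ ?_
  · rw [integral_sub (D.bc_ew hτ).int (D.bc_uAw hτ).int] at key
    unfold II; linarith
  · intro r hr
    refine (((D.d_r r hr τ hτ).mul (D.d_rr r hr τ hτ)).mul (ww_dr r0 r τ hτ0)).congr_deriv ?_
    have := hr.1.ne'
    simp only [AA, Pi.mul_apply]; field_simp; ring
  · simpa using (((D.t0_u hτ).mul (D.t0_ur hτ)).mul (tw 0 _ nhdsWithin_le_nhds))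
  · simpa using (((D.l_u τ hτ).mul hL).mul (tw R _ nhdsWithin_le_nhds))

lemma dH : HasDerivAt (HH R r0 u) (2 * II R r0 κ u ur τ
    + 2 * (∫ r in Ioo 0 R, u r τ * ff κ u urr ut r τ * ww r0 r τ) + HH R r0 u τ / (2 * τ)) τ := by
  refine (D.dH0 hτ).congr_deriv ?_
  have hτ0 := hτ.1
  obtain ⟨L, hL⟩ := D.l_ur τ hτ
  have key := ftc_open (F := fun r => (-2 * (u r τ * ur r τ) - u r τ ^ 2 * ((r - r0) / (2 * τ))) * ww r0 r τ)
    (F' := fun r => (2 * u r τ * ut r τ + u r τ ^ 2 * ((r - r0) ^ 2 / (4 * τ ^ 2))) * ww r0 r τ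
      + (-2) * ((ur r τ ^ 2 + κ * (u r τ / r) ^ 2) * ww r0 r τ)
      + (-2) * (u r τ * ff κ u urr ut r τ * ww r0 r τ)
      + (-1 / (2 * τ)) * (u r τ ^ 2 * ww r0 r τ)) (a := 0) (b := 0) D.hR ?_ ?_ ?_ ?_
  · rw [BC.lin4 (D.bc_dH hτ) (D.bc_ew hτ) (D.bc_ufw hτ) (D.bc_uw hτ)] at key
    unfold II HH; linear_combination key
  · intro r hr
    have hx : HasDerivAt (fun r : ℝ => (r - r0) / (2 * τ)) (1 / (2 * τ)) r :=
      ((hasDerivAt_id r).sub_const r0).div_const _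
    refine (((((D.d_r r hr τ hτ).mul (D.d_rr r hr τ hτ)).const_mul (-2)).sub
      (((D.d_r r hr τ hτ).pow 2).mul hx)).mul (ww_dr r0 r τ hτ0)).congr_deriv ?_
    have := hr.1.ne'
    simp only [ff, Pi.mul_apply, Pi.pow_apply, Pi.sub_apply]; field_simp; ring
  · exact (((D.bc_dH hτ).add ((BC.const _).mul (D.bc_ew hτ))).add
      ((BC.const _).mul (D.bc_ufw hτ))).add ((BC.const _).mul (D.bc_uw hτ))
  · simpa using (((((D.t0_u hτ).mul (D.t0_ur hτ)).const_mul (-2)).sub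
      (((D.t0_u hτ).pow 2).mul (tx 0 _ nhdsWithin_le_nhds))).mul (tw 0 _ nhdsWithin_le_nhds))
  · simpa using (((((D.l_u τ hτ).mul hL).const_mul (-2)).sub
      (((D.l_u τ hτ).pow 2).mul (tx R _ nhdsWithin_le_nhds))).mul (tw R _ nhdsWithin_le_nhds))

lemma dI : ∃ I', HasDerivAt (II R r0 κ u ur) I' τ ∧
    2 * (∫ r in Ioo 0 R, AA κ r0 u ur urr r τ ^ 2 * ww r0 r τ)
    + 2 * (∫ r in Ioo 0 R, ff κ u urr ut r τ * AA κ r0 u ur urr r τ * ww r0 r τ)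
    - II R r0 κ u ur τ / (2 * τ) ≤ I' := by
  refine ⟨_, D.dI0 hτ, ?_⟩
  have hτ0 := hτ.1
  have hκ := D.hκ
  obtain ⟨L, hL⟩ := D.l_ur τ hτ
  have hbc := (((D.bc_dI hτ).add ((BC.const (1 / (2 * τ))).mul (D.bc_ew hτ))).add
      ((BC.const (-2)).mul (D.bc_AAw hτ))).add ((BC.const (-2)).mul (D.bc_fAw hτ))
  have hbc2 := (BC.const (-(κ * r0 / τ))).mul (D.bc_cw hτ)
  have key := ftc_open (F := fun r => (2 * (ur r τ * (ut r τ + (r - r0) / (2 * τ) * ur r τ))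
      - (r - r0) / (2 * τ) * (ur r τ ^ 2 + κ * (u r τ / r) ^ 2)) * ww r0 r τ)
    (F' := fun r => ((2 * ur r τ * urt r τ + κ * (2 * (u r τ / r) * (ut r τ / r))
      + (ur r τ ^ 2 + κ * (u r τ / r) ^ 2) * ((r - r0) ^ 2 / (4 * τ ^ 2))) * ww r0 r τ
      + (1 / (2 * τ)) * ((ur r τ ^ 2 + κ * (u r τ / r) ^ 2) * ww r0 r τ)
      + (-2) * (AA κ r0 u ur urr r τ ^ 2 * ww r0 r τ)
      + (-2) * (ff κ u urr ut r τ * AA κ r0 u ur urr r τ * ww r0 r τ))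
      + (-(κ * r0 / τ)) * (u r τ ^ 2 / r ^ 3 * ww r0 r τ))
      (a := 0) (b := (R - r0) / (2 * τ) * L ^ 2 * ww r0 R τ) D.hR ?_ ?_ ?_ ?_
  · rw [integral_add hbc.int hbc2.int, BC.lin4 (D.bc_dI hτ) (D.bc_ew hτ) (D.bc_AAw hτ) (D.bc_fAw hτ),
      integral_const_mul] at key
    have p1 : 0 ≤ (R - r0) / (2 * τ) * L ^ 2 * ww r0 R τ := by
      have := D.hr0.2
      have := ww_pos r0 R τ
      have : 0 ≤ (R - r0) / (2 * τ) := div_nonneg (by linarith) (by linarith)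
      positivity
    have p2 : 0 ≤ κ * r0 / τ * ∫ r in Ioo 0 R, u r τ ^ 2 / r ^ 3 * ww r0 r τ := by
      have := D.hr0.1
      refine mul_nonneg (by positivity) (setIntegral_nonneg measurableSet_Ioo (fun r hr => ?_))
      have := hr.1
      have := ww_pos r0 r τ
      positivity
    have e : II R r0 κ u ur τ / (2 * τ) = 1 / (2 * τ) * II R r0 κ u ur τ := by ring
    rw [e]
    unfold II
    linarith
  · intro r hr
    have hx : HasDerivAt (fun r : ℝ => (r - r0) / (2 * τ)) (1 / (2 * τ)) r :=
      ((hasDerivAt_id r).sub_const r0).div_const _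
    have hr0 := hr.1.ne'
    have d1 := D.d_r r hr τ hτ
    have d2 := D.d_rr r hr τ hτ
    have d3 := D.d_tr r hr τ hτ
    have := ((((d2.mul (d3.add (hx.mul d2))).const_mul 2).sub
      (hx.mul ((d2.pow 2).add (((d1.div (hasDerivAt_id r) hr0).pow 2).const_mul κ)))).mul (ww_dr r0 r τ hτ0))
    refine this.congr_deriv ?_
    simp only [ff, AA, Pi.mul_apply, Pi.pow_apply, Pi.sub_apply, Pi.add_apply, Pi.div_apply, id, Nat.reduceSub, pow_one, Nat.cast_ofNat]
    field_simp; ring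
  · exact hbc.add hbc2
  · have := ((((D.t0_ur hτ).mul ((D.t0_ut hτ).add ((tx (r0 := r0) (τ := τ) 0 _ nhdsWithin_le_nhds).mul (D.t0_ur hτ)))).const_mul 2).sub
      ((tx (r0 := r0) (τ := τ) 0 _ nhdsWithin_le_nhds).mul (((D.t0_ur hτ).pow 2).add
        (((D.t0_q hτ).pow 2).const_mul κ)))).mul (tw (r0 := r0) (τ := τ) 0 _ nhdsWithin_le_nhds)
    refine Tendsto.congr' (EventuallyEq.refl _ _) (this.trans_eq ?_)
    simp
  · have := (((hL.mul ((D.l_ut τ hτ).add ((tx (r0 := r0) (τ := τ) R _ nhdsWithin_le_nhds).mul hL))).const_mul 2).sub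
      ((tx (r0 := r0) (τ := τ) R _ nhdsWithin_le_nhds).mul ((hL.pow 2).add
        (((D.tR_q hτ).pow 2).const_mul κ)))).mul (tw (r0 := r0) (τ := τ) R _ nhdsWithin_le_nhds)
    refine Tendsto.congr' (EventuallyEq.refl _ _) (this.trans_eq ?_)
    congr 1; ring

end fixed
end UD
end core4

section core5
open MeasureTheory Topology

variable {R T κ r0 C : ℝ} {u ur urr ut urt : ℝ → ℝ → ℝ}

namespace UD

lemma H_nonneg (τ : ℝ) : 0 ≤ HH R r0 u τ :=
  setIntegral_nonneg measurableSet_Ioo (fun r _ => mul_nonneg (sq_nonneg _) (ww_pos _ _ _).le)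

lemma I_nonneg (D : UD R T κ r0 C u ur urr ut urt) (τ : ℝ) : 0 ≤ II R r0 κ u ur τ :=
  setIntegral_nonneg measurableSet_Ioo (fun r _ => mul_nonneg
    (add_nonneg (sq_nonneg _) (mul_nonneg D.hκ.le (sq_nonneg _))) (ww_pos _ _ _).le)

section fixed
variable {τ : ℝ} (D : UD R T κ r0 C u ur urr ut urt) (hτ : τ ∈ Ioo 0 T)
include D hτ

lemma F_le : ∫ r in Ioo 0 R, ff κ u urr ut r τ ^ 2 * ww r0 r τ ≤ C * II R r0 κ u ur τ := by
  unfold II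
  rw [← integral_const_mul]
  refine setIntegral_mono_on (D.bc_ffw hτ).int ((BC.const C).mul (D.bc_ew hτ)).int measurableSet_Ioo ?_
  intro r hr
  have := D.pde r hr τ hτ
  rw [← mul_assoc]
  exact mul_le_mul_of_nonneg_right this (ww_pos _ _ _).le

lemma Q_le : 2 * (∫ r in Ioo 0 R, u r τ * ff κ u urr ut r τ * ww r0 r τ) ≤
    HH R r0 u τ + ∫ r in Ioo 0 R, ff κ u urr ut r τ ^ 2 * ww r0 r τ := by
  unfold HH
  rw [← integral_const_mul, ← integral_add (D.bc_uw hτ).int (D.bc_ffw hτ).int]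
  refine setIntegral_mono_on ((BC.const 2).mul (D.bc_ufw hτ)).int
    ((D.bc_uw hτ).add (D.bc_ffw hτ)).int measurableSet_Ioo ?_
  intro r hr
  have := ww_pos r0 r τ
  nlinarith [mul_nonneg (sq_nonneg (u r τ - ff κ u urr ut r τ)) this.le]

/-- Cauchy-Schwarz -/
lemma CS : (II R r0 κ u ur τ + 1 / 2 * ∫ r in Ioo 0 R, u r τ * ff κ u urr ut r τ * ww r0 r τ) ^ 2 ≤
    HH R r0 u τ * ((∫ r in Ioo 0 R, AA κ r0 u ur urr r τ ^ 2 * ww r0 r τ)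
      + (∫ r in Ioo 0 R, ff κ u urr ut r τ * AA κ r0 u ur urr r τ * ww r0 r τ)
      + 1 / 4 * ∫ r in Ioo 0 R, ff κ u urr ut r τ ^ 2 * ww r0 r τ) := by
  have hI := D.uA hτ
  set c := II R r0 κ u ur τ + 1 / 2 * ∫ r in Ioo 0 R, u r τ * ff κ u urr ut r τ * ww r0 r τ with hc
  set gg := (∫ r in Ioo 0 R, AA κ r0 u ur urr r τ ^ 2 * ww r0 r τ)
      + (∫ r in Ioo 0 R, ff κ u urr ut r τ * AA κ r0 u ur urr r τ * ww r0 r τ)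
      + 1 / 4 * ∫ r in Ioo 0 R, ff κ u urr ut r τ ^ 2 * ww r0 r τ with hg
  have key : ∀ s : ℝ, 0 ≤ HH R r0 u τ * (s * s) + (-2 * c) * s + gg := by
    intro s
    have h1 : 0 ≤ ∫ r in Ioo 0 R, (AA κ r0 u ur urr r τ + 1 / 2 * ff κ u urr ut r τ - s * u r τ) ^ 2
        * ww r0 r τ :=
      setIntegral_nonneg measurableSet_Ioo (fun r _ => mul_nonneg (sq_nonneg _) (ww_pos _ _ _).le)
    have h2 : ∫ r in Ioo 0 R, (AA κ r0 u ur urr r τ + 1 / 2 * ff κ u urr ut r τ - s * u r τ) ^ 2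
        * ww r0 r τ = HH R r0 u τ * (s * s) + (-2 * c) * s + gg := by
      have e : ∀ r, (AA κ r0 u ur urr r τ + 1 / 2 * ff κ u urr ut r τ - s * u r τ) ^ 2
        * ww r0 r τ = (AA κ r0 u ur urr r τ ^ 2 * ww r0 r τ
          + 1 * (ff κ u urr ut r τ * AA κ r0 u ur urr r τ * ww r0 r τ)
          + (1 / 4) * (ff κ u urr ut r τ ^ 2 * ww r0 r τ)
          + (s * s) * (u r τ ^ 2 * ww r0 r τ))
          + (-2 * s) * (u r τ * AA κ r0 u ur urr r τ * ww r0 r τ)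
          + (-s) * (u r τ * ff κ u urr ut r τ * ww r0 r τ) := fun r => by ring
      simp_rw [e]
      have b0 := (((D.bc_AAw hτ).add ((BC.const 1).mul (D.bc_fAw hτ))).add
        ((BC.const (1 / 4)).mul (D.bc_ffw hτ))).add ((BC.const (s * s)).mul (D.bc_uw hτ))
      have b1 := (BC.const (-2 * s)).mul (D.bc_uAw hτ)
      have b2 := (BC.const (-s)).mul (D.bc_ufw hτ)
      rw [integral_add (b0.add b1).int b2.int, integral_add b0.int b1.int,
        BC.lin4 (D.bc_AAw hτ) (D.bc_fAw hτ) (D.bc_ffw hτ) (D.bc_uw hτ), integral_const_mul,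
        integral_const_mul, hI, hc, hg]
      unfold HH
      ring
    linarith
  have := discrim_le_zero key
  unfold discrim at this
  nlinarith

end fixed

lemma freq (D : UD R T κ r0 C u ur urr ut urt) (hH : ∀ τ ∈ Ioo 0 T, 0 < HH R r0 u τ)
    {τ0 : ℝ} (hτ0 : τ0 ∈ Ioo 0 T) :
    ∃ N0, 0 ≤ N0 ∧ ∀ τ ∈ Ioc 0 τ0, τ * II R r0 κ u ur τ ≤ N0 * HH R r0 u τ := by
  set N : ℝ → ℝ := fun τ => Real.exp (C / 2 * τ) * (τ * II R r0 κ u ur τ / HH R r0 u τ) with hN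
  have hd : ∀ τ ∈ Ioo 0 T, ∃ d, HasDerivAt N d τ ∧ 0 ≤ d := by
    intro τ hτ
    obtain ⟨I', hI', hle⟩ := D.dI hτ
    have hH' := D.dH hτ
    have hHp := hH τ hτ
    have hτp := hτ.1
    have h1 : HasDerivAt (fun τ => τ * II R r0 κ u ur τ / HH R r0 u τ) _ τ :=
      ((hasDerivAt_id τ).mul hI').div hH' hHp.ne'
    have h2 : HasDerivAt (fun τ => Real.exp (C / 2 * τ)) (C / 2 * Real.exp (C / 2 * τ)) τ := by
      have := ((hasDerivAt_id τ).const_mul (C / 2)).exp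
      simpa [mul_comm] using this
    refine ⟨_, h2.mul h1, ?_⟩
    have hCS := D.CS hτ
    have hF := D.F_le hτ
    simp only [Pi.mul_apply, id]
    set I := II R r0 κ u ur τ
    set H := HH R r0 u τ
    set Q := ∫ r in Ioo 0 R, u r τ * ff κ u urr ut r τ * ww r0 r τ
    set P1 := ∫ r in Ioo 0 R, AA κ r0 u ur urr r τ ^ 2 * ww r0 r τ
    set P2 := ∫ r in Ioo 0 R, ff κ u urr ut r τ * AA κ r0 u ur urr r τ * ww r0 r τ
    set F := ∫ r in Ioo 0 R, ff κ u urr ut r τ ^ 2 * ww r0 r τ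
    set E := Real.exp (C / 2 * τ)
    have hE : 0 < E := Real.exp_pos _
    have e : C / 2 * E * (τ * I / H) + E * (((1 * I + τ * I') * H - τ * I * (2 * I + 2 * Q + H / (2 * τ))) / H ^ 2)
      = E / H ^ 2 * (C / 2 * τ * I * H + ((I + τ * I') * H - τ * I * (2 * I + 2 * Q) - I * H / 2)) := by
      field_simp; ring
    rw [e]
    refine mul_nonneg (by positivity) ?_
    have h3 : τ * (2 * P1 + 2 * P2 - I / (2 * τ)) ≤ τ * I' := mul_le_mul_of_nonneg_left hle hτp.le
    have h4 : τ * (2 * P1 + 2 * P2 - I / (2 * τ)) = τ * (2 * P1 + 2 * P2) - I / 2 := by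
      field_simp
    rw [h4] at h3
    have h5 := mul_le_mul_of_nonneg_right h3 hHp.le
    have h6 := mul_le_mul_of_nonneg_left hCS (mul_nonneg zero_le_two hτp.le)
    have h7 := mul_le_mul_of_nonneg_left hF (mul_nonneg hτp.le hHp.le)
    have h8 : 0 ≤ τ * Q ^ 2 := by positivity
    nlinarith
  have hmono : MonotoneOn N (Ioo 0 T) := by
    refine monotoneOn_of_deriv_nonneg (convex_Ioo 0 T) ?_ ?_ ?_
    · intro τ hτ
      obtain ⟨d, hd, -⟩ := hd τ hτ
      exact hd.continuousAt.continuousWithinAt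
    · intro τ hτ
      rw [interior_Ioo] at hτ
      obtain ⟨d, hd, -⟩ := hd τ hτ
      exact hd.differentiableAt.differentiableWithinAt
    · intro τ hτ
      rw [interior_Ioo] at hτ
      obtain ⟨d, hd, h0⟩ := hd τ hτ
      rw [hd.deriv]; exact h0
  have hn : ∀ τ ∈ Ioo 0 T, 0 ≤ τ * II R r0 κ u ur τ / HH R r0 u τ := fun τ hτ =>
    div_nonneg (mul_nonneg hτ.1.le (D.I_nonneg τ)) (hH τ hτ).le
  refine ⟨N τ0, mul_nonneg (Real.exp_pos _).le (hn τ0 hτ0), fun τ hτ => ?_⟩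
  have hτ' : τ ∈ Ioo 0 T := ⟨hτ.1, hτ.2.trans_lt hτ0.2⟩
  rw [← div_le_iff₀ (hH τ hτ')]
  have h1 := hmono hτ' hτ0 hτ.2
  refine le_trans ?_ h1
  have : 1 ≤ Real.exp (C / 2 * τ) := Real.one_le_exp (by have := D.hC; have := hτ.1; positivity)
  exact le_mul_of_one_le_left (hn τ hτ') this

lemma lower (D : UD R T κ r0 C u ur urr ut urt) (hT : 0 < T) (hH : ∀ τ ∈ Ioo 0 T, 0 < HH R r0 u τ) :
    ∃ c > 0, ∃ τ0 > 0, τ0 < T ∧ ∃ K : ℕ, ∀ τ ∈ Ioc 0 τ0, c * τ ^ K ≤ HH R r0 u τ := by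
  have hτ0 : T / 2 ∈ Ioo 0 T := ⟨by linarith, by linarith⟩
  obtain ⟨N0, hN0, hN⟩ := D.freq hH hτ0
  obtain ⟨K, hK⟩ := exists_nat_ge ((2 + C) * N0 + T + 1 / 2)
  set G : ℝ → ℝ := fun τ => HH R r0 u τ / τ ^ K with hG
  have hd : ∀ τ ∈ Ioc 0 (T / 2), ∃ d, HasDerivAt G d τ ∧ d ≤ 0 := by
    intro τ hτ
    have hτ' : τ ∈ Ioo 0 T := ⟨hτ.1, hτ.2.trans_lt hτ0.2⟩
    have hτp := hτ.1
    have h1 := (D.dH hτ').div (hasDerivAt_pow K τ) (by positivity)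
    refine ⟨_, h1, ?_⟩
    have hF := D.F_le hτ'
    have hQ := D.Q_le hτ'
    have hNN := hN τ hτ
    have hHp := hH τ hτ'
    set I := II R r0 κ u ur τ
    set H := HH R r0 u τ
    refine div_nonpos_of_nonpos_of_nonneg ?_ (by positivity)
    set Q := ∫ r in Ioo 0 R, u r τ * ff κ u urr ut r τ * ww r0 r τ
    have h2 : τ * (2 * I + 2 * Q + H / (2 * τ)) ≤ K * H := by
      have e : τ * (2 * I + 2 * Q + H / (2 * τ)) = τ * (2 * I + 2 * Q) + H / 2 := by field_simp
      rw [e]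
      have a1 : τ * (2 * I + 2 * Q) ≤ τ * ((2 + C) * I + H) :=
        mul_le_mul_of_nonneg_left (by linarith) hτp.le
      have a2 : (2 + C) * (τ * I) ≤ (2 + C) * (N0 * H) :=
        mul_le_mul_of_nonneg_left hNN (by linarith [D.hC])
      have a3 : τ * H ≤ T * H := mul_le_mul_of_nonneg_right hτ'.2.le hHp.le
      have a4 := mul_le_mul_of_nonneg_right hK hHp.le
      nlinarith
    have h3 : H * (K * τ ^ (K - 1)) * τ = K * H * τ ^ K := by
      rcases Nat.eq_zero_or_pos K with h | h
      · subst h; simp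
      · obtain ⟨k, rfl⟩ := Nat.exists_eq_add_of_le' h
        simp; ring
    have h4 : ((2 * I + 2 * Q + H / (2 * τ)) * τ ^ K - H * (K * τ ^ (K - 1))) * τ ≤ 0 := by
      rw [sub_mul, h3]
      have := mul_le_mul_of_nonneg_right h2 (pow_pos hτp K).le
      linarith
    exact nonpos_of_mul_nonpos_left h4 hτp
  have hanti : AntitoneOn G (Ioc 0 (T / 2)) := by
    refine antitoneOn_of_deriv_nonpos (convex_Ioc 0 _) ?_ ?_ ?_
    · intro τ hτ
      obtain ⟨d, hd, -⟩ := hd τ hτ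
      exact hd.continuousAt.continuousWithinAt
    · intro τ hτ
      rw [interior_Ioc] at hτ
      obtain ⟨d, hd, -⟩ := hd τ ⟨hτ.1, hτ.2.le⟩
      exact hd.differentiableAt.differentiableWithinAt
    · intro τ hτ
      rw [interior_Ioc] at hτ
      obtain ⟨d, hd, h0⟩ := hd τ ⟨hτ.1, hτ.2.le⟩
      rw [hd.deriv]; exact h0
  refine ⟨G (T / 2), div_pos (hH _ hτ0) (by have := hτ0.1; positivity), T / 2, hτ0.1, hτ0.2, K, fun τ hτ => ?_⟩
  have h1 := hanti hτ ⟨hτ0.1, le_rfl⟩ hτ.2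
  rwa [← le_div_iff₀ (pow_pos hτ.1 K)]

lemma upper {n : ℕ} {c τ : ℝ} (D : UD R T κ r0 C u ur urr ut urt) (hτ : τ ∈ Ioo 0 T) (hc : 0 ≤ c)
    (h : ∀ r ∈ Ioo 0 R, u r τ ^ 2 ≤ c * ((r - r0) ^ 2 + τ) ^ n) :
    HH R r0 u τ ≤ c * (4 ^ n * n.factorial * Real.exp (1 / 4)) * R * τ ^ n := by
  have hτp := hτ.1
  have h1 : ∀ r ∈ Ioo 0 R, u r τ ^ 2 * ww r0 r τ ≤ c * (4 ^ n * n.factorial * Real.exp (1 / 4)) * τ ^ n := by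
    intro r hr
    set y := (r - r0) ^ 2 / τ with hy
    have hy0 : 0 ≤ y := by positivity
    have e1 : (r - r0) ^ 2 + τ = τ * (1 + y) := by rw [hy]; field_simp; ring
    have e2 : ww r0 r τ = Real.exp (1 / 4) * (Real.exp ((1 + y) / 4))⁻¹ := by
      rw [← Real.exp_neg, ← Real.exp_add, ww]; congr 1; rw [hy]; field_simp; ring
    have e3 : ((1 + y) / 4) ^ n / n.factorial ≤ Real.exp ((1 + y) / 4) :=
      Real.pow_div_factorial_le_exp _ (by positivity) n
    rw [div_le_iff₀ (by positivity), div_pow, div_le_iff₀ (by positivity)] at e3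
    have hE := Real.exp_pos ((1 + y) / 4)
    calc u r τ ^ 2 * ww r0 r τ ≤ c * ((r - r0) ^ 2 + τ) ^ n * ww r0 r τ :=
          mul_le_mul_of_nonneg_right (h r hr) (ww_pos _ _ _).le
      _ = c * τ ^ n * Real.exp (1 / 4) * ((1 + y) ^ n * (Real.exp ((1 + y) / 4))⁻¹) := by
          rw [e1, e2, mul_pow]; ring
      _ ≤ c * τ ^ n * Real.exp (1 / 4) * (n.factorial * 4 ^ n) := by
          refine mul_le_mul_of_nonneg_left ?_ (by positivity)
          rw [← div_eq_mul_inv, div_le_iff₀ hE]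
          linarith
      _ = _ := by ring
  have h2 := setIntegral_mono_on (D.bc_uw hτ).int
    (BC.const (c * (4 ^ n * n.factorial * Real.exp (1 / 4)) * τ ^ n)).int measurableSet_Ioo h1
  refine h2.trans (le_of_eq ?_)
  have hR := D.hR
  simp [hR.le]
  ring

lemma pos {τ : ℝ} (D : UD R T κ r0 C u ur urr ut urt) (hτ : τ ∈ Ioo 0 T)
    (h : ∃ r ∈ Ioo 0 R, u r τ ≠ 0) : 0 < HH R r0 u τ := by
  rcases (H_nonneg (R := R) (r0 := r0) (u := u) τ).lt_or_eq with h1 | h1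
  · exact h1
  exfalso
  obtain ⟨r, hr, hne⟩ := h
  have h2 := (setIntegral_eq_zero_iff_of_nonneg_ae
    (Eventually.of_forall (fun r => mul_nonneg (sq_nonneg _) (ww_pos r0 r τ).le)) (D.bc_uw hτ).int).1 h1.symm
  have h3 := Measure.eqOn_open_of_ae_eq h2 isOpen_Ioo (D.bc_uw hτ).1 continuousOn_const
  have := h3 hr
  simp [hne, (ww_pos r0 r τ).ne'] at this

theorem sucp (D : UD R T κ r0 C u ur urr ut urt) (hT : 0 < T)
    (hne : ∀ τ ∈ Ioo 0 T, ∃ r ∈ Ioo 0 R, u r τ ≠ 0)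
    (hflat : ∀ n : ℕ, ∃ c, 0 ≤ c ∧ ∀ r ∈ Ioo 0 R, ∀ τ ∈ Ioo 0 T, u r τ ^ 2 ≤ c * ((r - r0) ^ 2 + τ) ^ n) :
    False := by
  obtain ⟨c, hc, τ0, h0, h0T, K, hK⟩ := D.lower hT (fun τ hτ => D.pos hτ (hne τ hτ))
  obtain ⟨c', hc', hf⟩ := hflat (K + 1)
  set M := c' * (4 ^ (K + 1) * (K + 1).factorial * Real.exp (1 / 4)) * R with hM
  have hM0 : 0 ≤ M := by have := D.hR; positivity
  set τ := min τ0 (c / (2 * (M + 1))) with hτ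
  have hτp : 0 < τ := lt_min h0 (by positivity)
  have hτ' : τ ∈ Ioo 0 T := ⟨hτp, (min_le_left _ _).trans_lt h0T⟩
  have h1 := hK τ ⟨hτp, min_le_left _ _⟩
  have h2 := D.upper hτ' hc' (fun r hr => hf r hr τ hτ')
  have h3 : c * τ ^ K ≤ M * τ * τ ^ K := by rw [← hM] at h2; rw [mul_assoc, ← pow_succ']; linarith
  have h4 := le_of_mul_le_mul_right h3 (pow_pos hτp K)
  have h5 : τ * (2 * (M + 1)) ≤ c := by
    rw [← le_div_iff₀ (by positivity)]; exact min_le_right _ _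
  nlinarith

end UD
end core5

section sucp2
open Topology
variable {R t1 t2 : ℝ} {g h : ℝ × ℝ → ℝ}

lemma Sm.Dt_zero {r t : ℝ} (hg : Sm (SS R t1 t2) g) (hr : r ∈ Icc 0 R) (h0 : ∀ t ∈ Ioo t1 t2, g (r, t) = 0)
    (ht : t ∈ Ioo t1 t2) : Dt (SS R t1 t2) g (r, t) = 0 := by
  have h1 := hg.hasDt hr ht
  have h2 : HasDerivAt (fun s => g (r, s)) 0 t := by
    refine (hasDerivAt_const t (0 : ℝ)).congr_of_eventuallyEq ?_
    filter_upwards [isOpen_Ioo.mem_nhds ht] with s hs using h0 s hs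
  exact h1.unique h2

lemma Sm.lin0 (hR : 0 < R) (hg : Sm (SS R t1 t2) g) (h0 : ∀ t ∈ Ioo t1 t2, g (0, t) = 0)
    {a b : ℝ} (ha : t1 < a) (hb : b < t2) :
    ∃ C, 0 < C ∧ ∀ r ∈ Icc 0 R, ∀ t ∈ Icc a b, |g (r, t)| ≤ C * r := by
  obtain ⟨C, hC, h⟩ := (hg.dr hR).bdd ha hb
  refine ⟨C, hC, fun r hr t ht => ?_⟩
  have ht' : t ∈ Ioo t1 t2 := ⟨ha.trans_le ht.1, ht.2.trans_lt hb⟩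
  have := mvt_r (convex_Icc 0 R) (fun x hx => hg.hasDrW hx ht') (fun x hx => h x hx t ht)
    (left_mem_Icc.2 hR.le) hr
  simpa [h0 t ht', abs_of_nonneg hr.1] using this

lemma Sm.cont_r (hg : Sm (SS R t1 t2) g) {t : ℝ} (ht : t ∈ Ioo t1 t2) :
    ContinuousOn (fun r => g (r, t)) (Icc 0 R) :=
  fun r hr => (hg.hasDrW hr ht).continuousWithinAt

lemma rho_d {k r : ℝ} (hr : 0 < r) {φ : ℝ → ℝ} {φ' : ℝ} (h : HasDerivAt φ φ' r) :
    HasDerivAt (fun x => x ^ k * φ x) (r ^ k * (φ' + k / r * φ r)) r := by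
  have := (Real.hasDerivAt_rpow_const (p := k) (Or.inl hr.ne')).mul h
  refine this.congr_deriv ?_
  rw [Real.rpow_sub_one hr.ne']
  field_simp; ring

lemma rho_le {k r : ℝ} (hk : 1 / 2 ≤ k) (hr : 0 < r) (hrR : r ≤ R) :
    r ^ k ≤ R ^ (k - 1 / 2) * √r := by
  have : r ^ k = r ^ (k - 1 / 2) * √r := by
    rw [Real.sqrt_eq_rpow, ← Real.rpow_add hr]; congr 1; ring
  rw [this]
  exact mul_le_mul_of_nonneg_right (Real.rpow_le_rpow hr.le hrR (by linarith)) (Real.sqrt_nonneg _)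

set_option maxHeartbeats 2000000 in
theorem sucp2 {m : ℕ} (hm : 2 ≤ m) {R t1 t2 s T r0 K : ℝ} {g : ℝ × ℝ → ℝ} (hR : 0 < R)
    (hg : Sm (SS R t1 t2) g) (hs : s ∈ Ioo t1 t2) (hT : 0 < T) (hsT : t1 < s - T)
    (hr0 : r0 ∈ Icc 0 R)
    (h0 : ∀ t ∈ Ioo t1 t2, g (0, t) = 0) (h1 : ∀ t ∈ Ioo t1 t2, g (R, t) = 0) (hK : 0 ≤ K)
    (hpde : ∀ r ∈ Ioo 0 R, ∀ t ∈ Ioo (s - T) s,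
      |Dt (SS R t1 t2) g (r, t) - Dr (SS R t1 t2) (Dr (SS R t1 t2) g) (r, t)
        - ((m : ℝ) - 1) / r * Dr (SS R t1 t2) g (r, t) + ((m : ℝ) - 1) / r ^ 2 * g (r, t)|
      ≤ K * (|g (r, t)| / r + |Dr (SS R t1 t2) g (r, t) + ((m : ℝ) - 1) / 2 / r * g (r, t)|))
    (hne : ∀ t ∈ Ioo (s - T) s, ∃ r ∈ Ioo 0 R, g (r, t) ≠ 0)
    (hflat : ∀ n : ℕ, ∃ c, 0 ≤ c ∧ ∀ r ∈ Ioo 0 R, ∀ t ∈ Ioo (s - T) s,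
      |g (r, t)| ≤ c * ((r - r0) ^ 2 + (s - t)) ^ n) : False := by
  have hm' : (2 : ℝ) ≤ m := by exact_mod_cast hm
  set S := SS R t1 t2 with hS
  set k : ℝ := ((m : ℝ) - 1) / 2 with hk
  have hk2 : 1 / 2 ≤ k := by rw [hk]; linarith
  set κ : ℝ := ((m : ℝ) ^ 2 - 1) / 4 with hκ
  have hκp : 0 < κ := by rw [hκ]; nlinarith
  have hgr := hg.dr hR
  have hgt := hg.dt hR
  have hgrt := hgr.dt hR
  have hgrr := hgr.dr hR
  have hgtr := hgt.dr hR
  have ht0 : ∀ t ∈ Ioo t1 t2, Dt S g (0, t) = 0 := fun t ht => hg.Dt_zero (left_mem_Icc.2 hR.le) h0 ht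
  have htR : ∀ t ∈ Ioo t1 t2, Dt S g (R, t) = 0 := fun t ht => hg.Dt_zero (right_mem_Icc.2 hR.le) h1 ht
  obtain ⟨C1, hC1, b1⟩ := hg.lin0 hR h0 hsT hs.2
  obtain ⟨C2, hC2, b2⟩ := hgt.lin0 hR ht0 hsT hs.2
  obtain ⟨C3, hC3, b3⟩ := hgr.bdd hsT hs.2
  obtain ⟨C4, hC4, b4⟩ := hgrt.bdd hsT hs.2
  set P : ℝ := R ^ (k - 1 / 2) with hP
  have hPp : 0 < P := Real.rpow_pos_of_pos hR _
  have hmem : ∀ τ ∈ Ioo 0 T, s - τ ∈ Ioo (s - T) s := fun τ hτ => ⟨by linarith [hτ.2], by linarith [hτ.1]⟩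
  have hmem1 : ∀ τ ∈ Ioo 0 T, s - τ ∈ Ioo t1 t2 := fun τ hτ =>
    ⟨by linarith [hτ.2], by linarith [hτ.1, hs.2]⟩
  have hmem2 : ∀ τ ∈ Ioo 0 T, s - τ ∈ Icc (s - T) s := fun τ hτ => ⟨by linarith [hτ.2], by linarith [hτ.1]⟩
  have hst : ∀ τ : ℝ, HasDerivAt (fun τ => s - τ) (-1) τ := fun τ => by
    simpa using (hasDerivAt_id τ).const_sub s
  -- bounds for brackets
  have key : ∀ (A B a1 a3 r : ℝ), 0 < r → r ≤ R → 0 < a1 → 0 < a3 → |A| ≤ a1 * r → |B| ≤ a3 →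
      |r ^ k * (B + k / r * A)| ≤ P * (a3 + k * a1) * √r := by
    intro A B a1 a3 r hr hrR ha1 ha3 hA hB
    have e1 : |B + k / r * A| ≤ a3 + k * a1 := by
      have : |k / r * A| ≤ k * a1 := by
        rw [abs_mul, abs_of_nonneg (by positivity)]
        calc k / r * |A| ≤ k / r * (a1 * r) := by gcongr
          _ = k * a1 := by field_simp
      exact (abs_add_le _ _).trans (add_le_add hB this)
    rw [abs_mul, abs_of_nonneg (Real.rpow_nonneg hr.le _)]
    calc r ^ k * |B + k / r * A| ≤ (P * √r) * (a3 + k * a1) :=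
          mul_le_mul (rho_le hk2 hr hrR) e1 (abs_nonneg _) (by positivity)
      _ = _ := by ring
  have key2 : ∀ (A a1 r : ℝ), 0 < r → r ≤ R → 0 < a1 → |A| ≤ a1 * r →
      |r ^ k * A| ≤ P * a1 * r * √r := by
    intro A a1 r hr hrR ha1 hA
    rw [abs_mul, abs_of_nonneg (Real.rpow_nonneg hr.le _)]
    calc r ^ k * |A| ≤ (P * √r) * (a1 * r) :=
          mul_le_mul (rho_le hk2 hr hrR) hA (abs_nonneg _) (by positivity)
      _ = _ := by ring
  set X1 := P * C1
  set X2 := P * C2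
  set X3 := P * (C3 + k * C1)
  set X4 := P * (C4 + k * C2)
  set X5 := 2 * K ^ 2 * (1 + 1 / κ)
  have hX1 : 0 < X1 := by positivity
  have hX2 : 0 < X2 := by positivity
  have hX3 : 0 < X3 := by positivity
  have hX4 : 0 < X4 := by positivity
  have hX5 : 0 ≤ X5 := by positivity
  have hrlim : Tendsto (fun r : ℝ => r) (𝓝[<] R) (𝓝 R) := nhdsWithin_le_nhds
  have hlim : ∀ (φ : ℝ × ℝ → ℝ), Sm S φ → ∀ t ∈ Ioo t1 t2,
      Tendsto (fun r => φ (r, t)) (𝓝[<] R) (𝓝 (φ (R, t))) := by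
    intro φ hφ t ht
    have := (hφ.cont_r ht) R (right_mem_Icc.2 hR.le)
    refine this.tendsto.mono_left ?_
    rw [← nhdsWithin_Ioo_eq_nhdsLT hR]
    exact nhdsWithin_mono _ Ioo_subset_Icc_self
  have hρlim : Tendsto (fun r : ℝ => r ^ k) (𝓝[<] R) (𝓝 (R ^ k)) :=
    hrlim.rpow_const (Or.inl hR.ne')
  have hcr : ContinuousOn (fun r : ℝ => r ^ k) (Ioo 0 R) := fun r hr =>
    (continuousAt_id.rpow_const (Or.inl hr.1.ne')).continuousWithinAt
  have hcd : ∀ c : ℝ, ContinuousOn (fun r : ℝ => c / r) (Ioo 0 R) := fun c r hr =>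
    (continuousAt_const.div continuousAt_id hr.1.ne').continuousWithinAt
  have hcd2 : ∀ c : ℝ, ContinuousOn (fun r : ℝ => c / r ^ 2) (Ioo 0 R) := fun c r hr =>
    (continuousAt_const.div (continuousAt_id.pow 2) (pow_ne_zero 2 hr.1.ne')).continuousWithinAt
  have hcφ : ∀ (φ : ℝ × ℝ → ℝ), Sm S φ → ∀ t ∈ Ioo t1 t2, ContinuousOn (fun r => φ (r, t)) (Ioo 0 R) :=
    fun φ hφ t ht => (hφ.cont_r ht).mono Ioo_subset_Icc_self
  have hcomm : ∀ r ∈ Ioo 0 R, ∀ t ∈ Ioo t1 t2, Dr S (Dt S g) (r, t) = Dt S (Dr S g) (r, t) :=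
    fun r hr t ht => hg.comm hR ⟨Ioo_subset_Icc_self hr, ht⟩
  have D : UD R T κ r0 (X1 + X2 + X3 + X4 + X5)
      (fun r τ => r ^ k * g (r, s - τ))
      (fun r τ => r ^ k * (Dr S g (r, s - τ) + k / r * g (r, s - τ)))
      (fun r τ => r ^ k * (Dr S (Dr S g) (r, s - τ) + 2 * k / r * Dr S g (r, s - τ)
        + (k ^ 2 - k) / r ^ 2 * g (r, s - τ)))
      (fun r τ => r ^ k * (-Dt S g (r, s - τ)))
      (fun r τ => r ^ k * (-Dt S (Dr S g) (r, s - τ) + k / r * -Dt S g (r, s - τ))) := by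
    constructor
    · exact hR
    · exact hκp
    · exact hr0
    · positivity
    · intro r hr τ hτ
      exact rho_d hr.1 (hg.hasDr hr (hmem1 τ hτ))
    · intro r hr τ hτ
      have d1 := hg.hasDr hr (hmem1 τ hτ)
      have d2 := hgr.hasDr hr (hmem1 τ hτ)
      have hr0 := hr.1.ne'
      have d3 : HasDerivAt (fun x : ℝ => k / x) (-k / r ^ 2) r := by
        have := (hasDerivAt_const r k).div (hasDerivAt_id r) hr0
        refine this.congr_deriv ?_
        simp
      have := rho_d (k := k) hr.1 (d2.add (d3.mul d1))
      refine this.congr_deriv ?_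
      simp only [Pi.add_apply, Pi.mul_apply]
      field_simp; ring
    · intro r hr τ hτ
      rw [← hcomm r hr _ (hmem1 τ hτ)]
      exact rho_d hr.1 (hgt.hasDr hr (hmem1 τ hτ)).neg
    · intro r hr τ hτ
      have := ((hg.hasDt (Ioo_subset_Icc_self hr) (hmem1 τ hτ)).scomp τ (hst τ)).const_mul (r ^ k)
      refine this.congr_deriv ?_
      simp [hS]
    · intro r hr τ hτ
      have e1 := ((hg.hasDt (Ioo_subset_Icc_self hr) (hmem1 τ hτ)).scomp τ (hst τ))
      have e2 := ((hgr.hasDt (Ioo_subset_Icc_self hr) (hmem1 τ hτ)).scomp τ (hst τ))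
      have := (e2.add (e1.const_mul (k / r))).const_mul (r ^ k)
      refine this.congr_deriv ?_
      simp [hS]
    · intro τ hτ
      have ht := hmem1 τ hτ
      exact hcr.mul (((hcφ _ hgrr _ ht).add ((hcd _).mul (hcφ _ hgr _ ht))).add
        ((hcd2 _).mul (hcφ _ hg _ ht)))
    · intro τ hτ
      have ht := hmem1 τ hτ
      exact hcr.mul ((hcφ _ hgrt _ ht).neg.add ((hcd _).mul (hcφ _ hgt _ ht).neg))
    · intro r hr τ hτ
      refine (key2 _ _ r hr.1 hr.2.le hC1 (b1 r (Ioo_subset_Icc_self hr) _ (hmem2 τ hτ))).trans ?_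
      have := hr.1
      gcongr
      linarith
    · intro r hr τ hτ
      refine (key2 _ _ r hr.1 hr.2.le hC2
        (by rw [abs_neg]; exact b2 r (Ioo_subset_Icc_self hr) _ (hmem2 τ hτ))).trans ?_
      have := hr.1
      gcongr
      linarith
    · intro r hr τ hτ
      refine (key _ _ _ _ r hr.1 hr.2.le hC1 hC3 (b1 r (Ioo_subset_Icc_self hr) _ (hmem2 τ hτ))
        (b3 r (Ioo_subset_Icc_self hr) _ (hmem2 τ hτ))).trans ?_
      gcongr
      linarith
    · intro r hr τ hτ
      refine (key _ _ _ _ r hr.1 hr.2.le hC2 hC4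
        (by rw [abs_neg]; exact b2 r (Ioo_subset_Icc_self hr) _ (hmem2 τ hτ))
        (by rw [abs_neg]; exact b4 r (Ioo_subset_Icc_self hr) _ (hmem2 τ hτ))).trans ?_
      gcongr
      linarith
    · intro r hr τ hτ
      have hp := hpde r hr _ (hmem τ hτ)
      have hrp := hr.1
      set G := g (r, s - τ)
      set Gr := Dr S g (r, s - τ)
      set Grr := Dr S (Dr S g) (r, s - τ)
      set Gt := Dt S g (r, s - τ)
      have e : r ^ k * (-Gt) + r ^ k * (Grr + 2 * k / r * Gr + (k ^ 2 - k) / r ^ 2 * G)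
          - κ / r ^ 2 * (r ^ k * G) = -(r ^ k * (Gt - Grr - ((m : ℝ) - 1) / r * Gr
            + ((m : ℝ) - 1) / r ^ 2 * G)) := by
        rw [hκ, hk]; field_simp; ring
      rw [e, neg_sq, mul_pow, ← sq_abs (Gt - _ - _ + _)]
      set Y := Gr + k / r * G
      have e2 : (r ^ k * G / r) ^ 2 = (r ^ k) ^ 2 * (|G| / r) ^ 2 := by
        rw [div_pow, div_pow, sq_abs]; field_simp
      have e3 : (r ^ k * Y) ^ 2 = (r ^ k) ^ 2 * |Y| ^ 2 := by rw [mul_pow, sq_abs]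
      have h3 : |Gt - Grr - ((m : ℝ) - 1) / r * Gr + ((m : ℝ) - 1) / r ^ 2 * G| ^ 2
          ≤ X5 * (|Y| ^ 2 + κ * (|G| / r) ^ 2) := by
        have := pow_le_pow_left₀ (abs_nonneg _) hp 2
        refine this.trans ?_
        have e4 : X5 * (|Y| ^ 2 + κ * (|G| / r) ^ 2) = 2 * K ^ 2 * (|Y| ^ 2 + (|G| / r) ^ 2)
          + 2 * K ^ 2 * (1 / κ * |Y| ^ 2 + κ * (|G| / r) ^ 2) := by
          simp only [X5]; field_simp; ring
        rw [e4]
        have e5 : 0 ≤ 2 * K ^ 2 * (1 / κ * |Y| ^ 2 + κ * (|G| / r) ^ 2) := by positivity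
        nlinarith [mul_nonneg (sq_nonneg K) (sq_nonneg (|G| / r - |Y|))]
      have h4 := mul_le_mul_of_nonneg_left h3 (sq_nonneg (r ^ k))
      rw [e2, e3]
      have h5 : 0 ≤ (X1 + X2 + X3 + X4) * ((r ^ k) ^ 2 * |Y| ^ 2 + κ * ((r ^ k) ^ 2 * (|G| / r) ^ 2)) := by
        positivity
      linarith
    · intro τ hτ
      have := hρlim.mul (hlim g hg _ (hmem1 τ hτ))
      rwa [h1 _ (hmem1 τ hτ), mul_zero] at this
    · intro τ hτ
      have := hρlim.mul (hlim _ hgt _ (hmem1 τ hτ)).neg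
      rwa [htR _ (hmem1 τ hτ), neg_zero, mul_zero] at this
    · intro τ hτ
      exact ⟨_, hρlim.mul ((hlim _ hgr _ (hmem1 τ hτ)).add
        ((tendsto_const_nhds.div hrlim hR.ne').mul (hlim g hg _ (hmem1 τ hτ))))⟩
  refine D.sucp hT ?_ ?_
  · intro τ hτ
    obtain ⟨r, hr, h⟩ := hne _ (hmem τ hτ)
    exact ⟨r, hr, mul_ne_zero (Real.rpow_pos_of_pos hr.1 _).ne' h⟩
  · intro n
    obtain ⟨c, hc, h⟩ := hflat n
    refine ⟨(P * √R) ^ 2 * c * X1 * R / P, ?_, ?_⟩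
    · positivity
    intro r hr τ hτ
    have a1 := h r hr _ (hmem τ hτ)
    have a2 := b1 r (Ioo_subset_Icc_self hr) _ (hmem2 τ hτ)
    have a3 : |g (r, s - τ)| ≤ C1 * R := a2.trans (by gcongr; exact hr.2.le)
    have a4 : r ^ k ≤ P * √R := (rho_le hk2 hr.1 hr.2.le).trans
      (by gcongr; exact hr.2.le)
    have a5 : (r ^ k) ^ 2 ≤ (P * √R) ^ 2 := pow_le_pow_left₀ (Real.rpow_nonneg hr.1.le _) a4 2
    have a6 : s - (s - τ) = τ := by ring
    rw [a6] at a1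
    have a7 : g (r, s - τ) ^ 2 ≤ (c * ((r - r0) ^ 2 + τ) ^ n) * (C1 * R) := by
      rw [← sq_abs, sq]
      exact mul_le_mul a1 a3 (abs_nonneg _) ((abs_nonneg _).trans a1)
    rw [mul_pow]
    refine (mul_le_mul a5 a7 (sq_nonneg _) (by positivity)).trans (le_of_eq ?_)
    simp only [X1]
    field_simp
end sucp2

section flat
open Topology
variable {R t1 t2 : ℝ} {g h : ℝ × ℝ → ℝ} {r0 s : ℝ}

def Fl (R r0 s : ℝ) (g : ℝ × ℝ → ℝ) : Prop :=
  ∀ n : ℕ, ∃ C, 0 ≤ C ∧ ∀ r ∈ Icc 0 R, |g (r, s)| ≤ C * |r - r0| ^ n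

def AccZ (R r0 s : ℝ) (g : ℝ × ℝ → ℝ) : Prop :=
  ∀ ε > 0, ∃ x ∈ Icc 0 R, x ≠ r0 ∧ |x - r0| < ε ∧ g (x, s) = 0

lemma AccZ.zero (hg : Sm (SS R t1 t2) g) (hs : s ∈ Ioo t1 t2) (hr0 : r0 ∈ Icc 0 R) (h : AccZ R r0 s g) :
    g (r0, s) = 0 := by
  by_contra hne
  have hc := hg.cont_r hs r0 hr0
  have := hc.eventually_ne hne
  rw [eventually_nhdsWithin_iff, Metric.eventually_nhds_iff] at this
  obtain ⟨ε, hε, h1⟩ := this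
  obtain ⟨x, hx, -, hxe, h0⟩ := h ε hε
  exact h1 (by rwa [Real.dist_eq]) hx h0

lemma AccZ.dr (hg : Sm (SS R t1 t2) g) (hs : s ∈ Ioo t1 t2) (hr0 : r0 ∈ Icc 0 R) (h : AccZ R r0 s g) :
    AccZ R r0 s (Dr (SS R t1 t2) g) := by
  intro ε hε
  obtain ⟨x, hx, hxn, hxe, h0⟩ := h ε hε
  have hz := h.zero hg hs hr0
  have hc := hg.cont_r hs
  rcases lt_or_gt_of_ne hxn with hlt | hlt
  · obtain ⟨y, hy, hy0⟩ := exists_hasDerivAt_eq_zero (f := fun r => g (r, s))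
      (f' := fun r => Dr (SS R t1 t2) g (r, s)) hlt
      (hc.mono (Icc_subset_Icc hx.1 hr0.2)) (by rw [h0, hz])
      (fun y hy => hg.hasDr ⟨hx.1.trans_lt hy.1, hy.2.trans_le hr0.2⟩ hs)
    refine ⟨y, ⟨hx.1.trans hy.1.le, hy.2.le.trans hr0.2⟩, hy.2.ne, ?_, hy0⟩
    rw [abs_lt] at hxe ⊢
    constructor <;> linarith [hy.1, hy.2]
  · obtain ⟨y, hy, hy0⟩ := exists_hasDerivAt_eq_zero (f := fun r => g (r, s))
      (f' := fun r => Dr (SS R t1 t2) g (r, s)) hlt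
      (hc.mono (Icc_subset_Icc hr0.1 hx.2)) (by rw [h0, hz])
      (fun y hy => hg.hasDr ⟨hr0.1.trans_lt hy.1, hy.2.trans_le hx.2⟩ hs)
    refine ⟨y, ⟨hr0.1.trans hy.1.le, hy.2.le.trans hx.2⟩, hy.1.ne', ?_, hy0⟩
    rw [abs_lt] at hxe ⊢
    constructor <;> linarith [hy.1, hy.2]

lemma uIcc_bd {r x : ℝ} (hx : x ∈ uIcc r0 r) : |x - r0| ≤ |r - r0| :=
  abs_sub_left_of_mem_uIcc hx

lemma AccZ.flat (hR : 0 < R) (hs : s ∈ Ioo t1 t2) (hr0 : r0 ∈ Icc 0 R) (hg : Sm (SS R t1 t2) g)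
    (h : AccZ R r0 s g) : Fl R r0 s g := by
  intro n
  induction n generalizing g with
  | zero =>
    obtain ⟨C, hC, hb⟩ := hg.bdd hs.1 hs.2
    exact ⟨C, hC.le, fun r hr => by simpa using hb r hr s ⟨le_rfl, le_rfl⟩⟩
  | succ n ih =>
    obtain ⟨C, hC, hb⟩ := ih (hg.dr hR) (h.dr hg hs hr0)
    refine ⟨C, hC, fun r hr => ?_⟩
    have hsub : uIcc r0 r ⊆ Icc 0 R := ordConnected_Icc.uIcc_subset hr0 hr
    have := mvt_r (convex_uIcc r0 r) (f := fun x => g (x, s)) (f' := fun x => Dr (SS R t1 t2) g (x, s))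
      (C := C * |r - r0| ^ n) (fun x hx => (hg.hasDrW (hsub hx) hs).mono hsub)
      (fun x hx => (hb x (hsub hx)).trans (by gcongr ?_ * ?_ ^ _; exact uIcc_bd hx))
      (x := r0) (y := r) left_mem_uIcc right_mem_uIcc
    rw [h.zero hg hs hr0, sub_zero] at this
    rw [pow_succ, ← mul_assoc]
    exact this

lemma Fl.congr (h1 : Fl R r0 s g) (e : ∀ r ∈ Icc 0 R, h (r, s) = g (r, s)) : Fl R r0 s h := by
  intro n
  obtain ⟨C, hC, hb⟩ := h1 n
  exact ⟨C, hC, fun r hr => by rw [e r hr]; exact hb r hr⟩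

lemma Fl.add (h1 : Fl R r0 s g) (h2 : Fl R r0 s h) : Fl R r0 s (fun p => g p + h p) := by
  intro n
  obtain ⟨C, hC, hb⟩ := h1 n
  obtain ⟨C', hC', hb'⟩ := h2 n
  refine ⟨C + C', by positivity, fun r hr => (abs_add_le _ _).trans ?_⟩
  rw [add_mul]; exact add_le_add (hb r hr) (hb' r hr)

lemma Fl.mul (hs : s ∈ Ioo t1 t2) (h1 : Sm (SS R t1 t2) g) (h2 : Fl R r0 s h) : Fl R r0 s (fun p => g p * h p) := by
  intro n
  obtain ⟨C, hC, hb⟩ := h1.bdd hs.1 hs.2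
  obtain ⟨C', hC', hb'⟩ := h2 n
  refine ⟨C * C', by positivity, fun r hr => ?_⟩
  rw [abs_mul, mul_assoc]
  exact mul_le_mul (hb r hr s ⟨le_rfl, le_rfl⟩) (hb' r hr) (abs_nonneg _) hC.le

lemma landau (hR : 0 < R) (hs : s ∈ Ioo t1 t2) (hg : Sm (SS R t1 t2) g) :
    ∃ M, 0 < M ∧ ∀ r ∈ Icc 0 R, ∀ y ∈ Icc 0 R,
      |Dr (SS R t1 t2) g (r, s)| * |y - r| ≤ |g (y, s)| + |g (r, s)| + M * |y - r| ^ 2 := by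
  obtain ⟨M, hM, hb⟩ := ((hg.dr hR).dr hR).bdd hs.1 hs.2
  refine ⟨M, hM, fun r hr y hy => ?_⟩
  have hsub : uIcc r y ⊆ Icc 0 R := ordConnected_Icc.uIcc_subset hr hy
  have h1 : ∀ x ∈ uIcc r y, |Dr (SS R t1 t2) g (x, s) - Dr (SS R t1 t2) g (r, s)| ≤ M * |y - r| := by
    intro x hx
    have := mvt_r (convex_Icc 0 R) (fun x hx => (hg.dr hR).hasDrW hx hs)
      (fun x hx => hb x hx s ⟨le_rfl, le_rfl⟩) hr (hsub hx)
    exact this.trans (mul_le_mul_of_nonneg_left (uIcc_bd hx) hM.le)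
  have h2 := mvt_r (convex_uIcc r y) (f := fun x => g (x, s) - Dr (SS R t1 t2) g (r, s) * x)
    (f' := fun x => Dr (SS R t1 t2) g (x, s) - Dr (SS R t1 t2) g (r, s)) (C := M * |y - r|)
    (fun x hx => by
      have := ((hg.hasDrW (hsub hx) hs).mono hsub).sub
        ((hasDerivWithinAt_id x (uIcc r y)).const_mul (Dr (SS R t1 t2) g (r, s)))
      refine this.congr_deriv ?_
      simp)
    h1 left_mem_uIcc right_mem_uIcc
  have e : g (y, s) - Dr (SS R t1 t2) g (r, s) * y - (g (r, s) - Dr (SS R t1 t2) g (r, s) * r)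
    = (g (y, s) - g (r, s)) - Dr (SS R t1 t2) g (r, s) * (y - r) := by ring
  simp only [e] at h2
  rw [← abs_mul]
  have h3 := abs_sub_abs_le_abs_sub (Dr (SS R t1 t2) g (r, s) * (y - r)) (g (y, s) - g (r, s))
  rw [abs_sub_comm (Dr (SS R t1 t2) g (r, s) * (y - r))] at h3
  have h4 := abs_sub (g (y, s)) (g (r, s))
  nlinarith

lemma Fl.dr (hR : 0 < R) (hs : s ∈ Ioo t1 t2) (hr0 : r0 ∈ Icc 0 R) (hg : Sm (SS R t1 t2) g)
    (h : Fl R r0 s g) : Fl R r0 s (Dr (SS R t1 t2) g) := by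
  obtain ⟨M, hM, hL⟩ := landau hR hs hg
  -- value at r0
  have hz : Dr (SS R t1 t2) g (r0, s) = 0 := by
    obtain ⟨C, hC, hb⟩ := h 2
    obtain ⟨c, hc, hcn⟩ : ∃ c ∈ Icc 0 R, c ≠ r0 := by
      by_cases h : r0 = 0
      · exact ⟨R, right_mem_Icc.2 hR.le, by rw [h]; exact hR.ne'⟩
      · exact ⟨0, left_mem_Icc.2 hR.le, fun h' => h h'.symm⟩
    have hd : 0 < |c - r0| := abs_pos.2 (sub_ne_zero.2 hcn)
    have hg0 : g (r0, s) = 0 := by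
      have := hb r0 hr0
      simpa using this
    rw [← abs_nonpos_iff]
    refine le_of_forall_pos_le_add (fun ε hε => ?_)
    set θ := min 1 (ε / ((C + M) * |c - r0|)) with hθ
    have hθ0 : 0 < θ := lt_min one_pos (by positivity)
    have hy : r0 + θ * (c - r0) ∈ Icc 0 R := by
      have := (convex_Icc 0 R).add_smul_sub_mem hr0 hc (t := θ) ⟨hθ0.le, min_le_left _ _⟩
      simpa using this
    have h1 := hL r0 hr0 _ hy
    have h2 := hb _ hy
    have e : |r0 + θ * (c - r0) - r0| = θ * |c - r0| := by
      rw [add_sub_cancel_left, abs_mul, abs_of_pos hθ0]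
    rw [e] at h1 h2
    rw [hg0, abs_zero, add_zero] at h1
    have h3 : θ * ((C + M) * |c - r0|) ≤ ε := by
      rw [← le_div_iff₀ (by positivity)]; exact min_le_right _ _
    have h4 : |Dr (SS R t1 t2) g (r0, s)| * (θ * |c - r0|) ≤ ε * (θ * |c - r0|) := by
      nlinarith [mul_le_mul_of_nonneg_right h3 (mul_pos hθ0 hd).le]
    linarith [le_of_mul_le_mul_right h4 (mul_pos hθ0 hd)]
  intro n
  obtain ⟨C, hC, hb⟩ := h (2 * n + 1)
  refine ⟨2 * C * R ^ n + M * R / R ^ n, by positivity, fun r hr => ?_⟩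
  by_cases hrr : r = r0
  · rw [hrr, hz]; simp; positivity
  have hd : 0 < |r - r0| := abs_pos.2 (sub_ne_zero.2 hrr)
  have hdR : |r - r0| ≤ R := by
    rw [abs_le]; constructor <;> linarith [hr.1, hr.2, hr0.1, hr0.2]
  set d := |r - r0| with hdd
  set θ := (d / R) ^ n with hθ
  have hθ0 : 0 < θ := by positivity
  have hθ1 : θ ≤ 1 := pow_le_one₀ (by positivity) (by rw [div_le_one hR]; exact hdR)
  have hy : r + θ * (r0 - r) ∈ Icc 0 R := by
    have := (convex_Icc 0 R).add_smul_sub_mem hr hr0 (t := θ) ⟨hθ0.le, hθ1⟩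
    simpa using this
  have h1 := hL r hr _ hy
  have h2 := hb _ hy
  have h3 := hb r hr
  have e : |r + θ * (r0 - r) - r| = θ * d := by
    rw [add_sub_cancel_left, abs_mul, abs_of_pos hθ0, abs_sub_comm]
  have e2 : |r + θ * (r0 - r) - r0| ≤ d := by
    have : r + θ * (r0 - r) - r0 = (1 - θ) * (r - r0) := by ring
    rw [this, abs_mul, abs_of_nonneg (by linarith)]
    exact mul_le_of_le_one_left hd.le (by linarith)
  rw [e] at h1
  have h4 : |g (r + θ * (r0 - r), s)| ≤ C * d ^ (2 * n + 1) := h2.trans (by gcongr)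
  rw [← hdd] at h3
  have h5 : |Dr (SS R t1 t2) g (r, s)| * (θ * d) ≤ (2 * C * R ^ n + M * R / R ^ n) * d ^ n * (θ * d) := by
    have e3 : (2 * C * R ^ n) * d ^ n * (θ * d) = 2 * (C * d ^ (2 * n + 1)) := by
      rw [hθ, div_pow]; field_simp; ring
    have e4 : M * (θ * d) ^ 2 ≤ M * R / R ^ n * d ^ n * (θ * d) := by
      have : M * R / R ^ n * d ^ n * (θ * d) = M * R * θ * (θ * d) := by
        rw [hθ, div_pow]; field_simp
      rw [this]
      have : 0 ≤ M * θ * θ * d := by positivity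
      nlinarith
    have : (2 * C * R ^ n + M * R / R ^ n) * d ^ n * (θ * d) =
      (2 * C * R ^ n) * d ^ n * (θ * d) + M * R / R ^ n * d ^ n * (θ * d) := by ring
    rw [this, e3]
    linarith
  exact le_of_mul_le_mul_right h5 (by positivity)

lemma SmIter (hR : 0 < R) (hg : Sm (SS R t1 t2) g) (j : ℕ) : Sm (SS R t1 t2) ((Dt (SS R t1 t2))^[j] g) := by
  induction j with
  | zero => exact hg
  | succ j ih => rw [Function.iterate_succ_apply']; exact ih.dt hR

lemma DtIter_congr (e : EqOn g h (SS R t1 t2)) (j : ℕ) :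
    EqOn ((Dt (SS R t1 t2))^[j] g) ((Dt (SS R t1 t2))^[j] h) (SS R t1 t2) := by
  induction j with
  | zero => exact e
  | succ j ih =>
    rw [Function.iterate_succ_apply', Function.iterate_succ_apply']
    intro p hp
    simp only [Dt]
    rw [fderivWithin_congr ih (ih hp)]

lemma Sm.Dt_eq {r t d : ℝ} (hg : Sm (SS R t1 t2) g) (hr : r ∈ Icc 0 R) (ht : t ∈ Ioo t1 t2)
    (hd : HasDerivAt (fun s => g (r, s)) d t) : Dt (SS R t1 t2) g (r, t) = d :=
  (hg.hasDt hr ht).unique hd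

lemma DtIter_add (hR : 0 < R) (hg : Sm (SS R t1 t2) g) (hh : Sm (SS R t1 t2) h) (j : ℕ) :
    EqOn ((Dt (SS R t1 t2))^[j] (fun p => g p + h p))
      (fun p => (Dt (SS R t1 t2))^[j] g p + (Dt (SS R t1 t2))^[j] h p) (SS R t1 t2) := by
  induction j with
  | zero => exact fun p _ => rfl
  | succ j ih =>
    simp only [Function.iterate_succ_apply']
    rintro ⟨r, t⟩ hp
    have h1 := DtIter_congr ih 1 hp
    simp only [Function.iterate_one] at h1
    rw [h1]
    refine Sm.Dt_eq (g := fun p => (Dt (SS R t1 t2))^[j] g p + (Dt (SS R t1 t2))^[j] h p)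
      ((SmIter hR hg j).add (SmIter hR hh j)) hp.1 hp.2 ?_
    exact ((SmIter hR hg j).hasDt hp.1 hp.2).add ((SmIter hR hh j).hasDt hp.1 hp.2)

lemma Fl.mulIter (hR : 0 < R) (hs : s ∈ Ioo t1 t2) (j : ℕ) (hg : Sm (SS R t1 t2) g) (hh : Sm (SS R t1 t2) h)
    (hf : ∀ i ≤ j, Fl R r0 s ((Dt (SS R t1 t2))^[i] h)) :
    Fl R r0 s ((Dt (SS R t1 t2))^[j] (fun p => g p * h p)) := by
  induction j generalizing g h with
  | zero => exact (hf 0 le_rfl).mul hs hg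
  | succ j ih =>
    rw [Function.iterate_succ_apply]
    have e : EqOn (Dt (SS R t1 t2) (fun p => g p * h p))
        (fun p => Dt (SS R t1 t2) g p * h p + g p * Dt (SS R t1 t2) h p) (SS R t1 t2) := by
      rintro ⟨r, t⟩ hp
      exact Sm.Dt_eq (g := fun p => g p * h p) (hg.mul hh) hp.1 hp.2 ((hg.hasDt hp.1 hp.2).mul (hh.hasDt hp.1 hp.2))
    have e1 := DtIter_congr e j
    have e2 := DtIter_add hR ((hg.dt hR).mul hh) (hg.mul (hh.dt hR)) j
    refine Fl.congr (Fl.add (ih (hg.dt hR) hh (fun i hi => hf i (by omega)))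
      (ih hg (hh.dt hR) (fun i hi => ?_))) (fun r hr => ?_)
    · have := hf (i + 1) (by omega)
      rwa [Function.iterate_succ_apply] at this
    · rw [e1 ⟨hr, hs⟩]
      exact e2 ⟨hr, hs⟩

lemma Fl.div2 (hR : 0 < R) (hs : s ∈ Ioo t1 t2) (hr0 : r0 ∈ Icc 0 R) (hg : Sm (SS R t1 t2) g)
    (h0 : g (0, s) = 0) (h : Fl R r0 s (fun p => p.1 ^ 2 * g p)) : Fl R r0 s g := by
  intro n
  rcases hr0.1.eq_or_lt with h1 | h1
  · subst h1
    obtain ⟨C, hC, hb⟩ := h (n + 2)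
    refine ⟨C, hC, fun r hr => ?_⟩
    rcases hr.1.eq_or_lt with h2 | h2
    · rw [← h2, h0]; simp; positivity
    · have := hb r hr
      simp only [sub_zero, abs_mul, abs_pow] at this ⊢
      rw [abs_of_pos h2] at this ⊢
      have h3 : |g (r, s)| * r ^ 2 ≤ C * r ^ n * r ^ 2 := by
        rw [mul_assoc, ← pow_add]; linarith
      exact le_of_mul_le_mul_right h3 (by positivity)
  · obtain ⟨C, hC, hb⟩ := h n
    obtain ⟨M, hM, hb2⟩ := hg.bdd hs.1 hs.2
    refine ⟨4 / r0 ^ 2 * C + M * (2 / r0) ^ n, by positivity, fun r hr => ?_⟩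
    by_cases h2 : r0 / 2 ≤ r
    · have h3 := hb r hr
      simp only [abs_mul, abs_pow, sq_abs] at h3
      have h4 : r0 ^ 2 / 4 ≤ r ^ 2 := by nlinarith
      have h5 : r0 ^ 2 / 4 * |g (r, s)| ≤ C * |r - r0| ^ n :=
        (mul_le_mul_of_nonneg_right h4 (abs_nonneg _)).trans h3
      have h6 : |g (r, s)| = 4 / r0 ^ 2 * (r0 ^ 2 / 4 * |g (r, s)|) := by field_simp
      rw [h6]
      have h7 : 0 ≤ M * (2 / r0) ^ n * |r - r0| ^ n := by positivity
      have h8 := mul_le_mul_of_nonneg_left h5 (show 0 ≤ 4 / r0 ^ 2 by positivity)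
      rw [add_mul, mul_assoc (4 / r0 ^ 2) C]
      linarith
    · have h3 : 1 ≤ 2 / r0 * |r - r0| := by
        rw [abs_of_nonpos (by linarith), div_mul_eq_mul_div, le_div_iff₀ h1]; linarith
      have h4 : 1 ≤ (2 / r0) ^ n * |r - r0| ^ n := by rw [← mul_pow]; exact one_le_pow₀ h3
      have h5 := hb2 r hr s ⟨le_rfl, le_rfl⟩
      have h6 : 0 ≤ 4 / r0 ^ 2 * C * |r - r0| ^ n := by positivity
      nlinarith

/-- relation for time derivatives -/
lemma pdeIter (hR : 0 < R) {b : ℝ × ℝ → ℝ} {μ : ℝ} (hb : Sm (SS R t1 t2) b) (hg : Sm (SS R t1 t2) g)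
    (hpde : ∀ p ∈ SS R t1 t2, p.1 ^ 2 * Dt (SS R t1 t2) g p = p.1 ^ 2 * Dr (SS R t1 t2) (Dr (SS R t1 t2) g) p
      + μ * p.1 * Dr (SS R t1 t2) g p - b p * g p) (j : ℕ) :
    ∀ p ∈ SS R t1 t2, p.1 ^ 2 * (Dt (SS R t1 t2))^[j+1] g p
      = p.1 ^ 2 * Dr (SS R t1 t2) (Dr (SS R t1 t2) ((Dt (SS R t1 t2))^[j] g)) p
      + μ * p.1 * Dr (SS R t1 t2) ((Dt (SS R t1 t2))^[j] g) p
      - (Dt (SS R t1 t2))^[j] (fun p => b p * g p) p := by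
  induction j with
  | zero => simpa using hpde
  | succ j ih =>
    rintro ⟨r, t⟩ hp
    have s1 := SmIter hR hg (j + 1)
    have s0 := SmIter hR hg j
    have sb := SmIter hR (hb.mul hg) j
    have d1 := (s1.hasDt hp.1 hp.2).const_mul (r ^ 2)
    have d2 := ((((s0.dr hR).dr hR).hasDt hp.1 hp.2).const_mul (r ^ 2)).add
      (((s0.dr hR).hasDt hp.1 hp.2).const_mul (μ * r))
    have d3 := d2.sub (sb.hasDt hp.1 hp.2)
    have e1 : (fun σ => r ^ 2 * (Dt (SS R t1 t2))^[j+1] g (r, σ)) =ᶠ[𝓝 t]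
      (fun σ => r ^ 2 * Dr (SS R t1 t2) (Dr (SS R t1 t2) ((Dt (SS R t1 t2))^[j] g)) (r, σ)
      + μ * r * Dr (SS R t1 t2) ((Dt (SS R t1 t2))^[j] g) (r, σ)
      - (Dt (SS R t1 t2))^[j] (fun p => b p * g p) (r, σ)) := by
      filter_upwards [isOpen_Ioo.mem_nhds hp.2] with σ hσ using ih (r, σ) ⟨hp.1, hσ⟩
    have e2 := d1.unique (d3.congr_of_eventuallyEq e1)
    have c1 : ∀ q ∈ SS R t1 t2, Dt (SS R t1 t2) (Dr (SS R t1 t2) ((Dt (SS R t1 t2))^[j] g)) q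
        = Dr (SS R t1 t2) ((Dt (SS R t1 t2))^[j+1] g) q := fun q hq => by
      rw [Function.iterate_succ_apply' (Dt (SS R t1 t2)) j g, s0.comm hR hq]
    have c2 : Dt (SS R t1 t2) (Dr (SS R t1 t2) (Dr (SS R t1 t2) ((Dt (SS R t1 t2))^[j] g))) (r, t)
        = Dr (SS R t1 t2) (Dr (SS R t1 t2) ((Dt (SS R t1 t2))^[j+1] g)) (r, t) := by
      rw [← (s0.dr hR).comm hR hp]
      exact congrArg (fun L : ℝ × ℝ →L[ℝ] ℝ => L ((1 : ℝ), (0 : ℝ))) (fderivWithin_congr c1 (c1 _ hp))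
    rw [c2, c1 _ hp] at e2
    rw [Function.iterate_succ_apply' _ (j + 1)]
    rw [e2, Function.iterate_succ_apply' _ j (fun p => b p * g p)]

lemma flatIter (hR : 0 < R) (hs : s ∈ Ioo t1 t2) (hr0 : r0 ∈ Icc 0 R)
    {b : ℝ × ℝ → ℝ} {μ : ℝ} (hb : Sm (SS R t1 t2) b) (hg : Sm (SS R t1 t2) g)
    (hpde : ∀ p ∈ SS R t1 t2, p.1 ^ 2 * Dt (SS R t1 t2) g p = p.1 ^ 2 * Dr (SS R t1 t2) (Dr (SS R t1 t2) g) p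
      + μ * p.1 * Dr (SS R t1 t2) g p - b p * g p) (h0 : ∀ t ∈ Ioo t1 t2, g (0, t) = 0)
    (hf : Fl R r0 s g) (j : ℕ) : Fl R r0 s ((Dt (SS R t1 t2))^[j] g) := by
  have hz : ∀ j, ∀ t ∈ Ioo t1 t2, (Dt (SS R t1 t2))^[j] g (0, t) = 0 := by
    intro j
    induction j with
    | zero => exact h0
    | succ j ih =>
      intro t ht
      rw [Function.iterate_succ_apply']
      exact (SmIter hR hg j).Dt_zero (left_mem_Icc.2 hR.le) ih ht
  induction j using Nat.strong_induction_on with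
  | _ j ih =>
    cases j with
    | zero => exact hf
    | succ j =>
      refine Fl.div2 hR hs hr0 (SmIter hR hg _) (hz _ s hs) ?_
      have fj := ih j (by omega)
      have sj := SmIter hR hg j
      have f1 := fj.dr hR hs hr0 sj
      have f2 := f1.dr hR hs hr0 (sj.dr hR)
      have fb := Fl.mulIter hR hs j hb hg (fun i hi => ih i (by omega))
      have p2 : Sm (SS R t1 t2) (fun p => p.1 ^ 2) := contDiffOn_fst.pow 2
      have p1 : Sm (SS R t1 t2) (fun p => μ * p.1) := contDiffOn_const.mul contDiffOn_fst
      have pm : Sm (SS R t1 t2) (fun p => (-1 : ℝ)) := contDiffOn_const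
      refine Fl.congr (((f2.mul hs p2).add (f1.mul hs p1)).add (fb.mul hs pm)) (fun r hr => ?_)
      have := pdeIter hR hb hg hpde j (r, s) ⟨hr, hs⟩
      simp only at this ⊢
      rw [this]; ring

lemma flatST (hR : 0 < R) (hs : s ∈ Ioo t1 t2) {T : ℝ} (hT : t1 < s - T) (hg : Sm (SS R t1 t2) g)
    (hf : ∀ j, Fl R r0 s ((Dt (SS R t1 t2))^[j] g)) (n : ℕ) : ∀ j : ℕ,
    ∃ C, 0 ≤ C ∧ ∀ r ∈ Icc 0 R, ∀ t ∈ Icc (s - T) s,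
      |(Dt (SS R t1 t2))^[j] g (r, t)| ≤ C * ((r - r0) ^ 2 + (s - t)) ^ n := by
  induction n with
  | zero =>
    intro j
    obtain ⟨C, hC, hb⟩ := (SmIter hR hg j).bdd hT hs.2
    exact ⟨C, hC.le, fun r hr t ht => by simpa using hb r hr t ht⟩
  | succ n ih =>
    intro j
    obtain ⟨C, hC, h1⟩ := ih (j + 1)
    obtain ⟨C', hC', h2⟩ := hf j (2 * (n + 1))
    refine ⟨C + C', by positivity, fun r hr t ht => ?_⟩
    have hsub : Icc t s ⊆ Ioo t1 t2 := fun x hx =>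
      ⟨hT.trans_le (ht.1.trans hx.1), hx.2.trans_lt hs.2⟩
    have h3 := mvt_r (convex_Icc t s) (f := fun x => (Dt (SS R t1 t2))^[j] g (r, x))
      (f' := fun x => (Dt (SS R t1 t2))^[j+1] g (r, x)) (C := C * ((r - r0) ^ 2 + (s - t)) ^ n)
      (fun x hx => by
        rw [Function.iterate_succ_apply']
        exact ((SmIter hR hg j).hasDt hr (hsub hx)).hasDerivWithinAt)
      (fun x hx => (h1 r hr x ⟨ht.1.trans hx.1, hx.2⟩).trans (by
        have := hx.2
        have := hx.1
        have : 0 ≤ s - x := by linarith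
        gcongr))
      (right_mem_Icc.2 ht.2) (left_mem_Icc.2 ht.2)
    have h4 := h2 r hr
    rw [pow_mul, sq_abs] at h4
    set G := (Dt (SS R t1 t2))^[j] g (r, t)
    set G' := (Dt (SS R t1 t2))^[j] g (r, s)
    have h5 : |G| ≤ |G'| + |G - G'| := by
      have := abs_add_le G' (G - G'); simpa using this
    have e : |t - s| = s - t := by rw [abs_of_nonpos (by linarith [ht.2])]; ring
    rw [e] at h3
    set q := (r - r0) ^ 2 with hq
    have hq0 : 0 ≤ q := sq_nonneg _
    have hst : 0 ≤ s - t := by linarith [ht.2]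
    have h6 : q ^ (n + 1) ≤ (q + (s - t)) ^ (n + 1) := by gcongr; linarith
    have h7 : C * (q + (s - t)) ^ n * (s - t) ≤ C * (q + (s - t)) ^ (n + 1) := by
      rw [pow_succ, ← mul_assoc]; gcongr; linarith
    have h8 := mul_le_mul_of_nonneg_left h6 hC'
    rw [add_mul]
    linarith
end flat

section fin
open Topology

structure Sol (m : ℕ) (R t1 t2 : ℝ) (B V : ℝ × ℝ → ℝ) : Prop where
  hm : 2 ≤ m
  hR : 0 < R
  sB : Sm (SS R t1 t2) B
  sV : Sm (SS R t1 t2) V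
  hB0 : ∀ t ∈ Ioo t1 t2, B (0, t) = (m : ℝ) - 1
  pde : ∀ p ∈ SS R t1 t2, p.1 ^ 2 * Dt (SS R t1 t2) V p = p.1 ^ 2 * Dr (SS R t1 t2) (Dr (SS R t1 t2) V) p
      + ((m : ℝ) - 1) * p.1 * Dr (SS R t1 t2) V p - B p * V p

namespace Sol
variable {m : ℕ} {R t1 t2 : ℝ} {B V : ℝ × ℝ → ℝ} 

lemma z0 (D : Sol m R t1 t2 B V) : ∀ t ∈ Ioo t1 t2, V (0, t) = 0 := by
  intro t ht
  have := D.pde (0, t) ⟨left_mem_Icc.2 D.hR.le, ht⟩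
  simp [D.hB0 t ht] at this
  have hm : (2 : ℝ) ≤ m := by exact_mod_cast D.hm
  rcases this with h | h
  · linarith
  · exact h

lemma pde' (D : Sol m R t1 t2 B V) {r t : ℝ} (hr : r ∈ Icc 0 R) (hr0 : 0 < r) (ht : t ∈ Ioo t1 t2) :
    Dt (SS R t1 t2) V (r, t) = Dr (SS R t1 t2) (Dr (SS R t1 t2) V) (r, t)
      + ((m : ℝ) - 1) / r * Dr (SS R t1 t2) V (r, t) - B (r, t) / r ^ 2 * V (r, t) := by
  have := D.pde (r, t) ⟨hr, ht⟩
  simp only at this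
  field_simp
  linarith

lemma flat (D : Sol m R t1 t2 B V) {s r0 : ℝ} (hs : s ∈ Ioo t1 t2) (hr0 : r0 ∈ Icc 0 R)
    (h : AccZ R r0 s V) {T : ℝ} (hT : t1 < s - T) (n : ℕ) :
    ∃ C, 0 ≤ C ∧ ∀ r ∈ Icc 0 R, ∀ t ∈ Icc (s - T) s, |V (r, t)| ≤ C * ((r - r0) ^ 2 + (s - t)) ^ n :=
  flatST D.hR hs hT D.sV (fun j => flatIter D.hR hs hr0 D.sB D.sV D.pde D.z0
    (h.flat D.hR hs hr0 D.sV) j) n 0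

lemma bB (D : Sol m R t1 t2 B V) {a b : ℝ} (ha : t1 < a) (hb : b < t2) :
    ∃ C, 0 < C ∧ ∀ r ∈ Icc 0 R, ∀ t ∈ Icc a b, |B (r, t) - ((m : ℝ) - 1)| ≤ C * r :=
  Sm.lin0 (g := fun p => B p - ((m : ℝ) - 1)) D.hR (D.sB.sub contDiffOn_const)
    (fun t ht => by rw [D.hB0 t ht, sub_self]) ha hb

theorem noAccD (D : Sol m R t1 t2 B V) {s r0 : ℝ} (hs : s ∈ Ioo t1 t2) (hr0 : r0 ∈ Icc 0 R)
    (h : AccZ R r0 s V) (hVR : ∀ t ∈ Ioo t1 t2, V (R, t) = 0)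
    (hne : ∀ t ∈ Ioo t1 s, ∃ r ∈ Icc 0 R, V (r, t) ≠ 0) : False := by
  set T := (s - t1) / 2 with hTd
  have hT : 0 < T := by linarith [hs.1]
  have hsT : t1 < s - T := by linarith [hs.1]
  obtain ⟨C, hC, hb⟩ := D.bB hsT hs.2
  refine sucp2 D.hm D.hR D.sV hs hT hsT hr0 D.z0 hVR hC.le ?_ ?_ ?_
  · intro r hr t ht
    have ht' : t ∈ Ioo t1 t2 := ⟨hsT.trans ht.1, ht.2.trans hs.2⟩
    rw [D.pde' (Ioo_subset_Icc_self hr) hr.1 ht']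
    have e : ∀ x y : ℝ, x + y - B (r, t) / r ^ 2 * V (r, t) - x - y + ((m : ℝ) - 1) / r ^ 2 * V (r, t)
      = -((B (r, t) - ((m : ℝ) - 1)) * V (r, t) / r ^ 2) := by intros; ring
    rw [e, abs_neg, abs_div, abs_mul, abs_of_nonneg (sq_nonneg r)]
    have hr0 := hr.1
    have h1 := hb r (Ioo_subset_Icc_self hr) t ⟨ht.1.le, ht.2.le⟩
    have h2 : |B (r, t) - ((m : ℝ) - 1)| * |V (r, t)| / r ^ 2 ≤ C * r * |V (r, t)| / r ^ 2 := by gcongr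
    have h3 : C * r * |V (r, t)| / r ^ 2 = C * (|V (r, t)| / r) := by field_simp
    rw [mul_add]
    have : 0 ≤ C * |Dr (SS R t1 t2) V (r, t) + ((m : ℝ) - 1) / 2 / r * V (r, t)| := by positivity
    linarith
  · intro t ht
    obtain ⟨r, hr, hn⟩ := hne t ⟨hsT.trans ht.1, ht.2⟩
    have ht' : t ∈ Ioo t1 t2 := ⟨hsT.trans ht.1, ht.2.trans hs.2⟩
    refine ⟨r, ⟨lt_of_le_of_ne hr.1 ?_, lt_of_le_of_ne hr.2 ?_⟩, hn⟩
    · rintro rfl; exact hn (D.z0 t ht')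
    · rintro rfl; exact hn (hVR t ht')
  · intro n
    obtain ⟨c, hc, h1⟩ := D.flat hs hr0 h hsT n
    exact ⟨c, hc, fun r hr t ht => h1 r (Ioo_subset_Icc_self hr) t (Ioo_subset_Icc_self ht)⟩

set_option maxHeartbeats 2000000 in
theorem noAccN (D : Sol m R t1 t2 B V) {s r0 : ℝ} (hs : s ∈ Ioo t1 t2) (hr0 : r0 ∈ Icc 0 R)
    (h : AccZ R r0 s V) (hVR : ∀ t ∈ Ioo t1 t2, V (R, t) ≠ 0) : False := by
  have hR := D.hR
  set T := (s - t1) / 2 with hTd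
  have hT : 0 < T := by linarith [hs.1]
  have hsT : t1 < s - T := by linarith [hs.1]
  have hm : (2 : ℝ) ≤ m := by exact_mod_cast D.hm
  obtain ⟨C, hC, hb⟩ := D.bB hsT hs.2
  obtain ⟨M1, hM1, hb1⟩ := (D.sV.dr hR).bdd hsT hs.2
  obtain ⟨C1, hC1, hc1⟩ := D.sV.lin0 hR D.z0 hsT hs.2
  have hsub : ∀ t ∈ Icc (s - T) s, t ∈ Ioo t1 t2 := fun t ht => ⟨hsT.trans_le ht.1, ht.2.trans_lt hs.2⟩
  -- lower bound at R
  obtain ⟨c, hc, hcl⟩ : ∃ c > 0, ∀ t ∈ Icc (s - T) s, 2 * c ≤ |V (R, t)| := by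
    have hcont : ContinuousOn (fun t => |V (R, t)|) (Icc (s - T) s) := fun t ht =>
      ((D.sV.hasDt (right_mem_Icc.2 hR.le) (hsub t ht)).continuousAt.abs).continuousWithinAt
    obtain ⟨t0, ht0, hmin⟩ := isCompact_Icc.exists_isMinOn (nonempty_Icc.2 (by linarith)) hcont
    refine ⟨|V (R, t0)| / 2, by have := abs_pos.2 (hVR t0 (hsub t0 ht0)); positivity, fun t ht => ?_⟩
    have : |V (R, t0)| ≤ |V (R, t)| := hmin ht
    linarith
  set μ : ℝ := (m : ℝ) - 1 with hμ
  have hμ1 : 1 ≤ μ := by linarith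
  set M := M1 + μ / 2 * C1 with hM
  have hMp : 0 < M := by positivity
  set δ := min (c / 2 / M) R with hδ
  have hδp : 0 < δ := lt_min (by positivity) hR
  have hδM : δ * M ≤ c / 2 := by rw [← le_div_iff₀ hMp]; exact min_le_left _ _
  -- near R
  have hnear : ∀ r ∈ Icc 0 R, R - r ≤ δ → ∀ t ∈ Icc (s - T) s, c ≤ |V (r, t)| := by
    intro r hr hrδ t ht
    have h1 := mvt_r (convex_Icc 0 R) (fun x hx => D.sV.hasDrW hx (hsub t ht))
      (fun x hx => hb1 x hx t ht) hr (right_mem_Icc.2 hR.le)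
    have h2 := hcl t ht
    rw [abs_of_nonneg (by linarith [hr.2] : 0 ≤ R - r)] at h1
    have h3 := abs_sub_abs_le_abs_sub (V (R, t)) (V (r, t))
    have h4 : M1 * (R - r) ≤ c := by
      have : M1 ≤ M := by have : 0 ≤ μ / 2 * C1 := by positivity
                          linarith
      calc M1 * (R - r) ≤ M * δ := mul_le_mul this hrδ (by linarith [hr.2]) hMp.le
        _ ≤ c := by linarith
    linarith
  have sL : Sm (SS R t1 t2) (fun p => R - p.1) := contDiffOn_const.sub contDiffOn_fst
  set g : ℝ × ℝ → ℝ := fun p => (R - p.1) * V p with hg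
  have sg : Sm (SS R t1 t2) g := sL.mul D.sV
  have hgr : ∀ r ∈ Ioo 0 R, ∀ t ∈ Ioo t1 t2, Dr (SS R t1 t2) g (r, t)
      = -V (r, t) + (R - r) * Dr (SS R t1 t2) V (r, t) := by
    intro r hr t ht
    have := ((hasDerivAt_id r).const_sub R).mul (D.sV.hasDr hr ht)
    have := (sg.hasDr hr ht).unique this
    rw [this]; simp
  have hgt : ∀ r ∈ Ioo 0 R, ∀ t ∈ Ioo t1 t2, Dt (SS R t1 t2) g (r, t) = (R - r) * Dt (SS R t1 t2) V (r, t) := by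
    intro r hr t ht
    have := (D.sV.hasDt (Ioo_subset_Icc_self hr) ht).const_mul (R - r)
    exact (sg.hasDt (Ioo_subset_Icc_self hr) ht).unique this
  have hgrr : ∀ r ∈ Ioo 0 R, ∀ t ∈ Ioo t1 t2, Dr (SS R t1 t2) (Dr (SS R t1 t2) g) (r, t)
      = -2 * Dr (SS R t1 t2) V (r, t) + (R - r) * Dr (SS R t1 t2) (Dr (SS R t1 t2) V) (r, t) := by
    intro r hr t ht
    have h1 := ((D.sV.hasDr hr ht).neg).add (((hasDerivAt_id r).const_sub R).mul ((D.sV.dr hR).hasDr hr ht))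
    have h2 : (fun x => Dr (SS R t1 t2) g (x, t)) =ᶠ[𝓝 r]
        (-(fun x => V (x, t))) + (fun x => R - id x) * (fun x => Dr (SS R t1 t2) V (x, t)) := by
      filter_upwards [isOpen_Ioo.mem_nhds hr] with x hx
      rw [hgr x hx t ht]; rfl
    have := ((sg.dr hR).hasDr hr ht).unique (h1.congr_of_eventuallyEq h2)
    rw [this]; simp; ring
  refine sucp2 D.hm hR sg hs hT hsT hr0 (fun t ht => by simp [hg, D.z0 t ht])
    (fun t ht => by simp [hg]) (K := C + 2 / δ + 2 * R / δ ^ 2 + 2 * M / (c / 2) + 0) ?_ ?_ ?_ ?_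
  · positivity
  · intro r hr t ht
    have ht2 : t ∈ Icc (s - T) s := Ioo_subset_Icc_self ht
    have hr2 := Ioo_subset_Icc_self hr
    have ht' := hsub t ht2
    have hrp := hr.1
    have hRr : 0 < R - r := by linarith [hr.2]
    rw [hgt r hr t ht', hgrr r hr t ht', hgr r hr t ht', D.pde' hr2 hr.1 ht']
    have hgv : g (r, t) = (R - r) * V (r, t) := rfl
    set v := V (r, t)
    set vr := Dr (SS R t1 t2) V (r, t)
    set vrr := Dr (SS R t1 t2) (Dr (SS R t1 t2) V) (r, t)
    rw [← hμ]
    set W := vr + μ / 2 / r * v with hW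
    set Y := -v + (R - r) * vr + μ / 2 / r * g (r, t) with hY
    have hYW : Y = -v + (R - r) * W := by rw [hY, hW, hgv]; ring
    have e : (R - r) * (vrr + μ / r * vr - B (r, t) / r ^ 2 * v) - (-2 * vr + (R - r) * vrr)
        - μ / r * (-v + (R - r) * vr) + μ / r ^ 2 * g (r, t)
        = -((B (r, t) - μ) * g (r, t) / r ^ 2) + 2 * W := by
      rw [hW, hgv]; field_simp; ring
    rw [e]
    have h1 := hb r hr2 t ht2
    have h2 : |-((B (r, t) - μ) * g (r, t) / r ^ 2)| ≤ C * (|g (r, t)| / r) := by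
      rw [abs_neg, abs_div, abs_mul, abs_of_nonneg (sq_nonneg r)]
      calc |B (r, t) - μ| * |g (r, t)| / r ^ 2 ≤ C * r * |g (r, t)| / r ^ 2 := by gcongr
        _ = C * (|g (r, t)| / r) := by field_simp
    have h3 : |2 * W| ≤ (2 / δ + 2 * R / δ ^ 2 + 2 * M / (c / 2)) * (|g (r, t)| / r + |Y|) := by
      have q1 : 0 ≤ |g (r, t)| / r := by positivity
      have q2 : 0 ≤ |Y| := abs_nonneg _
      have hA : 0 ≤ 2 / δ := by positivity
      have hB : 0 ≤ 2 * R / δ ^ 2 := by positivity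
      have hCc : 0 ≤ 2 * M / (c / 2) := by positivity
      rw [abs_mul, abs_two]
      by_cases hcase : δ ≤ R - r
      · have e1 : W = Y / (R - r) + g (r, t) / (R - r) ^ 2 := by
          rw [hYW, hgv]; field_simp; ring
        have e2 : |W| ≤ |Y| / δ + |g (r, t)| / δ ^ 2 := by
          rw [e1]
          refine (abs_add_le _ _).trans ?_
          rw [abs_div, abs_div, abs_of_pos hRr, abs_of_pos (by positivity : 0 < (R - r) ^ 2)]
          gcongr
        have e3 : |g (r, t)| / δ ^ 2 ≤ R / δ ^ 2 * (|g (r, t)| / r) := by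
          have : R / δ ^ 2 * (|g (r, t)| / r) = |g (r, t)| / δ ^ 2 * (R / r) := by field_simp
          rw [this]
          exact le_mul_of_one_le_right (by positivity) (by rw [one_le_div hrp]; exact hr.2.le)
        have e4 : 2 * |W| ≤ 2 / δ * |Y| + 2 * R / δ ^ 2 * (|g (r, t)| / r) := by
          have a1 : 2 / δ * |Y| = 2 * (|Y| / δ) := by ring
          have a2 : 2 * R / δ ^ 2 * (|g (r, t)| / r) = 2 * (R / δ ^ 2 * (|g (r, t)| / r)) := by ring
          rw [a1, a2]; linarith
        nlinarith [mul_nonneg hA q1, mul_nonneg hB q2, mul_nonneg hCc q1, mul_nonneg hCc q2]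
      · push Not at hcase
        have n1 := hnear r hr2 hcase.le t ht2
        have n2 : |W| ≤ M := by
          have w1 := hb1 r hr2 t ht2
          have w2 := hc1 r hr2 t ht2
          refine (abs_add_le _ _).trans (add_le_add w1 ?_)
          rw [abs_mul, abs_of_nonneg (by positivity : 0 ≤ μ / 2 / r)]
          calc μ / 2 / r * |v| ≤ μ / 2 / r * (C1 * r) := by gcongr
            _ = μ / 2 * C1 := by field_simp
        have n3 : c / 2 ≤ |Y| := by
          have a1 : |(R - r) * W| ≤ c / 2 := by
            rw [abs_mul, abs_of_pos hRr]
            exact (mul_le_mul hcase.le n2 (abs_nonneg _) hδp.le).trans hδM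
          have a2 := abs_sub_abs_le_abs_sub v ((R - r) * W)
          have a3 : |Y| = |v - (R - r) * W| := by rw [hYW, ← abs_neg]; congr 1; ring
          rw [a3]; linarith
        have n4 : 2 * M ≤ 2 * M / (c / 2) * |Y| := by
          rw [div_mul_eq_mul_div, le_div_iff₀ (by positivity)]
          exact mul_le_mul_of_nonneg_left n3 (by positivity)
        nlinarith [mul_nonneg hA q1, mul_nonneg hA q2, mul_nonneg hB q1, mul_nonneg hB q2, mul_nonneg hCc q1]
    have h4 := abs_add_le (-((B (r, t) - μ) * g (r, t) / r ^ 2)) (2 * W)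
    have h5 : 0 ≤ C * |Y| := by positivity
    nlinarith
  · intro t ht
    have ht2 : t ∈ Icc (s - T) s := Ioo_subset_Icc_self ht
    have : R - δ / 2 ∈ Ioo 0 R := ⟨by have : δ ≤ R := min_le_right _ _
                                      linarith, by linarith⟩
    refine ⟨_, this, mul_ne_zero ?_ ?_⟩
    · simp; exact hδp.ne'
    · have := hnear _ (Ioo_subset_Icc_self this) (by linarith) t ht2
      intro h0
      rw [h0, abs_zero] at this
      linarith
  · intro n
    obtain ⟨c, hc, h1⟩ := D.flat hs hr0 h hsT n
    refine ⟨R * c, by positivity, fun r hr t ht => ?_⟩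
    rw [hg]
    simp only [abs_mul]
    rw [mul_assoc]
    refine mul_le_mul ?_ (h1 r (Ioo_subset_Icc_self hr) t (Ioo_subset_Icc_self ht)) (abs_nonneg _) hR.le
    rw [abs_of_nonneg (by linarith [hr.2])]; linarith [hr.1]
end Sol
end fin

section maxp
open Topology

lemma maxM {E : Set (ℝ × ℝ)} (hE : IsCompact E) {w : ℝ × ℝ → ℝ} (hw : ContinuousOn w E) {Λ : ℝ}
    (h : ∀ r t, (r, t) ∈ E → 0 < w (r, t) → (∀ᶠ x in 𝓝 r, (x, t) ∈ E) ∧ (∀ᶠ τ in 𝓝[<] t, (r, τ) ∈ E) ∧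
      (IsLocalMax (fun x => w (x, t)) r → ∃ d, d ≤ Λ * w (r, t) ∧ HasDerivAt (fun τ => w (r, τ)) d t)) :
    ∀ p ∈ E, w p ≤ 0 := by
  intro p hp
  by_contra hpos
  push Not at hpos
  have hc : ContinuousOn (fun q : ℝ × ℝ => Real.exp (-(Λ + 1) * q.2) * w q) E := by
    refine ContinuousOn.mul ?_ hw
    fun_prop
  obtain ⟨⟨r, t⟩, hq, hmax⟩ := hE.exists_isMaxOn ⟨p, hp⟩ hc
  have hwp : 0 < w (r, t) := by
    have h1 : Real.exp (-(Λ + 1) * p.2) * w p ≤ Real.exp (-(Λ + 1) * t) * w (r, t) := hmax hp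
    have h2 : 0 < Real.exp (-(Λ + 1) * p.2) * w p := mul_pos (Real.exp_pos _) hpos
    exact pos_of_mul_pos_right (h2.trans_le h1) (Real.exp_pos _).le
  obtain ⟨h1, h2, h3⟩ := h r t hq hwp
  obtain ⟨d, hd, hdd⟩ := h3 (by
    filter_upwards [h1] with x hx
    have : Real.exp (-(Λ + 1) * t) * w (x, t) ≤ Real.exp (-(Λ + 1) * t) * w (r, t) := hmax hx
    exact le_of_mul_le_mul_left this (Real.exp_pos _))
  have h4 : HasDerivAt (fun τ => Real.exp (-(Λ + 1) * τ) * w (r, τ))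
      (Real.exp (-(Λ + 1) * t) * (d - (Λ + 1) * w (r, t))) t := by
    have := (((hasDerivAt_id t).const_mul (-(Λ + 1))).exp).mul hdd
    refine this.congr_deriv ?_
    simp; ring
  have h5 := (hasDerivWithinAt_iff_tendsto_slope' (s := Iio t) (by simp)).1 h4.hasDerivWithinAt
  have h6 : 0 ≤ Real.exp (-(Λ + 1) * t) * (d - (Λ + 1) * w (r, t)) := by
    refine ge_of_tendsto h5 ?_
    filter_upwards [h2, self_mem_nhdsWithin] with τ hτ hlt
    have hlt' : τ < t := hlt
    have : Real.exp (-(Λ + 1) * τ) * w (r, τ) ≤ Real.exp (-(Λ + 1) * t) * w (r, t) := hmax hτ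
    rw [slope_def_field]
    exact div_nonneg_of_nonpos (by linarith) (by linarith)
  have h7 := nonneg_of_mul_nonneg_right h6 (Real.exp_pos _)
  nlinarith

lemma second_deriv_max {f f' : ℝ → ℝ} {r f'' : ℝ} (h1 : ∀ᶠ x in 𝓝 r, HasDerivAt f (f' x) x)
    (h2 : HasDerivAt f' f'' r) (hm : IsLocalMax f r) : f' r = 0 ∧ f'' ≤ 0 := by
  have h0 := hm.hasDerivAt_eq_zero h1.self_of_nhds
  refine ⟨h0, ?_⟩
  by_contra hpos
  push Not at hpos
  have e : deriv f =ᶠ[𝓝 r] f' := by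
    filter_upwards [h1] with x hx using hx.deriv
  have e2 : deriv (deriv f) r = f'' := by rw [e.deriv_eq, h2.deriv]
  have hmin := isLocalMin_of_deriv_deriv_pos (f := f) (x₀ := r) (by rw [e2]; exact hpos)
    (by rw [e.self_of_nhds, h0]) h1.self_of_nhds.continuousAt
  have hcst : f =ᶠ[𝓝 r] fun _ => f r := by
    filter_upwards [hm, hmin] with x a b using le_antisymm a b
  have e3 : deriv f =ᶠ[𝓝 r] fun _ => 0 := by
    have := hcst.deriv
    simpa using this
  have : deriv (deriv f) r = 0 := by rw [e3.deriv_eq]; simp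
  linarith

namespace Sol
variable {m : ℕ} {R t1 t2 : ℝ} {B V : ℝ × ℝ → ℝ}

lemma neg (D : Sol m R t1 t2 B V) : Sol m R t1 t2 B (fun p => -V p) := by
  have hu := SS_unique (t1 := t1) (t2 := t2) D.hR
  have e1 : ∀ (U : ℝ × ℝ → ℝ), ∀ p ∈ SS R t1 t2, Dr (SS R t1 t2) (fun p => -U p) p = -Dr (SS R t1 t2) U p := by
    intro U p hp; simp only [Dr]; rw [fderivWithin_fun_neg (hu p hp)]; rfl
  have e2 : ∀ (U : ℝ × ℝ → ℝ), ∀ p ∈ SS R t1 t2, Dt (SS R t1 t2) (fun p => -U p) p = -Dt (SS R t1 t2) U p := by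
    intro U p hp; simp only [Dt]; rw [fderivWithin_fun_neg (hu p hp)]; rfl
  refine ⟨D.hm, D.hR, D.sB, D.sV.neg, D.hB0, fun p hp => ?_⟩
  have e3 : Dr (SS R t1 t2) (Dr (SS R t1 t2) (fun p => -V p)) p = Dr (SS R t1 t2) (fun p => -Dr (SS R t1 t2) V p) p :=
    congrArg (fun L : ℝ × ℝ →L[ℝ] ℝ => L (1, 0)) (fderivWithin_congr (e1 V) (e1 V p hp))
  rw [e2 V p hp, e3, e1 _ p hp, e1 V p hp]
  have := D.pde p hp
  linarith

lemma maxr (D : Sol m R t1 t2 B V) {r t : ℝ} (hr : r ∈ Ioo 0 R) (ht : t ∈ Ioo t1 t2)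
    (hm : IsLocalMax (fun x => V (x, t)) r) : Dt (SS R t1 t2) V (r, t) ≤ - (B (r, t) / r ^ 2 * V (r, t)) := by
  obtain ⟨h1, h2⟩ := second_deriv_max (f := fun x => V (x, t)) (f' := fun x => Dr (SS R t1 t2) V (x, t))
    (by filter_upwards [isOpen_Ioo.mem_nhds hr] with x hx using D.sV.hasDr hx ht)
    ((D.sV.dr D.hR).hasDr hr ht) hm
  rw [D.pde' (Ioo_subset_Icc_self hr) hr.1 ht, h1]
  linarith

lemma bLam (D : Sol m R t1 t2 B V) {a b : ℝ} (ha : t1 < a) (hb : b < t2) :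
    ∃ Λ, ∀ r ∈ Ioc 0 R, ∀ t ∈ Icc a b, -(B (r, t) / r ^ 2) ≤ Λ := by
  obtain ⟨C, hC, h1⟩ := D.bB ha hb
  obtain ⟨M, hM, h2⟩ := D.sB.bdd ha hb
  have hm : (2 : ℝ) ≤ m := by exact_mod_cast D.hm
  refine ⟨M * C ^ 2, fun r hr t ht => ?_⟩
  have hr' : r ∈ Icc 0 R := Ioc_subset_Icc_self hr
  have hrp := hr.1
  have a1 := h1 r hr' t ht
  have a2 := h2 r hr' t ht
  rw [abs_le] at a1 a2
  by_cases hc : C * r ≤ 1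
  · have : 0 ≤ B (r, t) / r ^ 2 := div_nonneg (by linarith) (by positivity)
    have : 0 ≤ M * C ^ 2 := by positivity
    linarith
  · push Not at hc
    rw [← neg_div, div_le_iff₀ (by positivity)]
    have : 1 ≤ (C * r) ^ 2 := one_le_pow₀ hc.le
    nlinarith

lemma lez (D : Sol m R t1 t2 B V) {a b : ℝ} (ha : t1 < a) (hb : b < t2) {E : Set (ℝ × ℝ)}
    (hE : IsCompact E) (hEs : E ⊆ Icc 0 R ×ˢ Icc a b)
    (h : ∀ r t, (r, t) ∈ E → V (r, t) ≠ 0 → r < R ∧ (∀ᶠ x in 𝓝 r, (x, t) ∈ E) ∧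
      ∀ᶠ τ in 𝓝[<] t, (r, τ) ∈ E) : ∀ p ∈ E, V p ≤ 0 := by
  obtain ⟨Λ, hΛ⟩ := D.bLam ha hb
  have hsub : ∀ t ∈ Icc a b, t ∈ Ioo t1 t2 := fun t ht => ⟨ha.trans_le ht.1, ht.2.trans_lt hb⟩
  refine maxM hE (Λ := Λ) (D.sV.cont.mono (fun p hp => ⟨(hEs hp).1, hsub _ (hEs hp).2⟩)) ?_
  intro r t hrt hV
  obtain ⟨h1, h2, h3⟩ := h r t hrt hV.ne'
  have hr := (hEs hrt).1
  have ht := (hEs hrt).2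
  have ht' := hsub t ht
  have hr0 : 0 < r := by
    refine lt_of_le_of_ne hr.1 ?_
    rintro rfl
    rw [D.z0 t ht'] at hV
    exact lt_irrefl _ hV
  refine ⟨h2, h3, fun hm => ⟨_, ?_, D.sV.hasDt hr ht'⟩⟩
  refine (D.maxr ⟨hr0, h1⟩ ht' hm).trans ?_
  rw [← neg_mul]
  exact mul_le_mul_of_nonneg_right (hΛ r ⟨hr0, hr.2⟩ t ht) hV.le

lemma eqz (D : Sol m R t1 t2 B V) {a b : ℝ} (ha : t1 < a) (hb : b < t2) {E : Set (ℝ × ℝ)}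
    (hE : IsCompact E) (hEs : E ⊆ Icc 0 R ×ˢ Icc a b)
    (h : ∀ r t, (r, t) ∈ E → V (r, t) ≠ 0 → r < R ∧ (∀ᶠ x in 𝓝 r, (x, t) ∈ E) ∧
      ∀ᶠ τ in 𝓝[<] t, (r, τ) ∈ E) : ∀ p ∈ E, V p = 0 := by
  intro p hp
  refine le_antisymm (D.lez ha hb hE hEs h p hp) ?_
  have := D.neg.lez ha hb hE hEs (fun r t hrt hn => h r t hrt (by simpa using hn)) p hp
  linarith

lemma fwd (D : Sol m R t1 t2 B V) {a b : ℝ} (ha : t1 < a) (hb : b < t2) (hab : a ≤ b)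
    (hR0 : ∀ t ∈ Ioo t1 t2, V (R, t) = 0) (h0 : ∀ r ∈ Icc 0 R, V (r, a) = 0) :
    ∀ r ∈ Icc 0 R, V (r, b) = 0 := by
  intro r hr
  refine D.eqz ha hb (isCompact_Icc.prod isCompact_Icc) (subset_refl (Icc 0 R ×ˢ Icc a b)) ?_ (r, b)
    ⟨hr, hab, le_rfl⟩
  rintro r t ⟨hr, ht⟩ hn
  simp only at hr ht
  have ht' : t ∈ Ioo t1 t2 := ⟨ha.trans_le ht.1, ht.2.trans_lt hb⟩
  have hrR : r < R := lt_of_le_of_ne hr.2 (by rintro rfl; exact hn (hR0 t ht'))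
  have hr0 : 0 < r := lt_of_le_of_ne hr.1 (by rintro rfl; exact hn (D.z0 t ht'))
  have hta : a < t := lt_of_le_of_ne ht.1 (by rintro rfl; exact hn (h0 r hr))
  refine ⟨hrR, ?_, ?_⟩
  · filter_upwards [Icc_mem_nhds hr0 hrR] with x hx using ⟨hx, ht⟩
  · filter_upwards [Ioo_mem_nhdsLT hta] with τ hτ using ⟨hr, hτ.1.le, hτ.2.le.trans ht.2⟩

lemma cont_t (D : Sol m R t1 t2 B V) {r t : ℝ} (hr : r ∈ Icc 0 R) (ht : t ∈ Ioo t1 t2) :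
    ContinuousAt (fun τ => V (r, τ)) t := (D.sV.hasDt hr ht).continuousAt

/-- positivity -/
lemma wnP (D : Sol m R t1 t2 B V) {a b α β : ℝ} (ha : t1 < a) (hb : b < t2) (hab : a ≤ b)
    (hα : 0 < α) (hαβ : α ≤ β) (hβ : β ≤ R)
    (hs : ∀ r ∈ Icc α β, 0 < V (r, a)) (h1 : ∀ t ∈ Icc a b, 0 < V (α, t)) (h2 : ∀ t ∈ Icc a b, 0 < V (β, t)) :
    ∀ r ∈ Icc α β, ∀ t ∈ Icc a b, 0 < V (r, t) := by
  have hsub : ∀ t ∈ Icc a b, t ∈ Ioo t1 t2 := fun t ht => ⟨ha.trans_le ht.1, ht.2.trans_lt hb⟩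
  have hsubr : ∀ r ∈ Icc α β, r ∈ Icc 0 R := fun r hr => ⟨hα.le.trans hr.1, hr.2.trans hβ⟩
  have hαm : α ∈ Icc 0 R := hsubr α ⟨le_rfl, hαβ⟩
  have hβm : β ∈ Icc 0 R := hsubr β ⟨hαβ, le_rfl⟩
  have low : ∀ (f : ℝ → ℝ) (x y : ℝ), x ≤ y → ContinuousOn f (Icc x y) → (∀ z ∈ Icc x y, 0 < f z) →
      ∃ ε > 0, ∀ z ∈ Icc x y, ε ≤ f z := by
    intro f x y hxy hf hp
    obtain ⟨z, hz, hmin⟩ := isCompact_Icc.exists_isMinOn (nonempty_Icc.2 hxy) hf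
    exact ⟨f z, hp z hz, fun z' hz' => hmin hz'⟩
  obtain ⟨ε1, he1, k1⟩ := low _ a b hab (fun t ht => (D.cont_t hαm (hsub t ht)).continuousWithinAt) h1
  obtain ⟨ε2, he2, k2⟩ := low _ a b hab (fun t ht => (D.cont_t hβm (hsub t ht)).continuousWithinAt) h2
  obtain ⟨ε3, he3, k3⟩ := low _ α β hαβ ((D.sV.cont_r (hsub a ⟨le_rfl, hab⟩)).mono hsubr) hs
  set ε := min ε1 (min ε2 ε3) with hε
  have hεp : 0 < ε := lt_min he1 (lt_min he2 he3)
  have l1 : ε ≤ ε1 := min_le_left _ _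
  have l2 : ε ≤ ε2 := (min_le_right _ _).trans (min_le_left _ _)
  have l3 : ε ≤ ε3 := (min_le_right _ _).trans (min_le_right _ _)
  obtain ⟨M, hM, hbd⟩ := D.sB.bdd ha hb
  set L := M / α ^ 2 with hL
  have hLp : 0 < L := by positivity
  have hBL : ∀ r ∈ Icc α β, ∀ t ∈ Icc a b, |B (r, t) / r ^ 2| ≤ L := by
    intro r hr t ht
    have hrp : 0 < r := hα.trans_le hr.1
    rw [abs_div, abs_of_pos (by positivity : 0 < r ^ 2), hL]
    have := hbd r (hsubr r hr) t ht
    have := hr.1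
    gcongr
  have key := maxM (E := Icc α β ×ˢ Icc a b) (isCompact_Icc.prod isCompact_Icc)
    (w := fun p => ε * Real.exp (-L * (p.2 - a)) - V p) (Λ := L) ?_ ?_
  · intro r hr t ht
    have := key (r, t) ⟨hr, ht⟩
    simp only at this
    have h3 : 0 < ε * Real.exp (-L * (t - a)) := by positivity
    linarith
  · refine ContinuousOn.sub (by fun_prop) (D.sV.cont.mono (fun p hp => ⟨hsubr _ hp.1, hsub _ hp.2⟩))
  · rintro r t ⟨hr, ht⟩ hw
    simp only at hr ht hw
    have ht' := hsub t ht
    have hr' := hsubr r hr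
    set e := Real.exp (-L * (t - a)) with he
    have hep : 0 < e := Real.exp_pos _
    have he1 : e ≤ 1 := by
      rw [he, Real.exp_le_one_iff]
      have := ht.1
      nlinarith
    have hle : ε * e ≤ ε := mul_le_of_le_one_right hεp.le he1
    have hrα : α < r := lt_of_le_of_ne hr.1 (by rintro rfl; have := k1 t ht; linarith)
    have hrβ : r < β := lt_of_le_of_ne hr.2 (by rintro rfl; have := k2 t ht; linarith)
    have hta : a < t := lt_of_le_of_ne ht.1 (by rintro rfl; have := k3 r hr; linarith)
    refine ⟨?_, ?_, ?_⟩
    · filter_upwards [Icc_mem_nhds hrα hrβ] with x hx using ⟨hx, ht⟩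
    · filter_upwards [Ioo_mem_nhdsLT hta] with τ hτ using ⟨hr, hτ.1.le, hτ.2.le.trans ht.2⟩
    intro hmax
    have hrI : r ∈ Ioo 0 R := ⟨hα.trans hrα, hrβ.trans_le hβ⟩
    have hd1 : HasDerivAt (fun τ => ε * Real.exp (-L * (τ - a))) (ε * (e * (-L))) t := by
      have := ((((hasDerivAt_id t).sub_const a).const_mul (-L)).exp).const_mul ε
      refine this.congr_deriv ?_
      simp [he]
    refine ⟨_, ?_, hd1.sub (D.sV.hasDt hr' ht')⟩
    have hm' : IsLocalMax (fun x => -V (x, t)) r := by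
      filter_upwards [hmax] with x hx
      linarith
    have h4 := D.neg.maxr hrI ht' hm'
    have h5 : Dt (SS R t1 t2) (fun p => -V p) (r, t) = -Dt (SS R t1 t2) V (r, t) :=
      Sm.Dt_eq (g := fun p => -V p) D.neg.sV hr' ht' (D.sV.hasDt hr' ht').neg
    rw [h5] at h4
    have h6 := hBL r hr t ht
    rw [abs_le] at h6
    change _ ≤ L * (ε * e - V (r, t))
    have h7 : B (r, t) / r ^ 2 * V (r, t) ≤ L * (ε * e) + L * (ε * e - V (r, t)) := by
      rcases le_total 0 (V (r, t)) with hv | hv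
      · have a1 : B (r, t) / r ^ 2 * V (r, t) ≤ L * V (r, t) := mul_le_mul_of_nonneg_right h6.2 hv
        have a2 : L * V (r, t) ≤ L * (ε * e) := mul_le_mul_of_nonneg_left (by linarith) hLp.le
        have a3 : 0 ≤ L * (ε * e - V (r, t)) := by apply mul_nonneg hLp.le; linarith
        linarith
      · have a1 : B (r, t) / r ^ 2 * V (r, t) ≤ -L * V (r, t) := mul_le_mul_of_nonpos_right h6.1 hv
        have a2 : 0 ≤ L * (ε * e) := by positivity
        linarith
    linarith

lemma wn (D : Sol m R t1 t2 B V) {a b α β : ℝ} (ha : t1 < a) (hb : b < t2) (hab : a ≤ b)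
    (hα : 0 < α) (hαβ : α ≤ β) (hβ : β ≤ R)
    (hs : ∀ r ∈ Icc α β, V (r, a) ≠ 0) (h1 : ∀ t ∈ Icc a b, V (α, t) ≠ 0) (h2 : ∀ t ∈ Icc a b, V (β, t) ≠ 0) :
    ∀ r ∈ Icc α β, V (r, b) ≠ 0 := by
  have hsub : ∀ t ∈ Icc a b, t ∈ Ioo t1 t2 := fun t ht => ⟨ha.trans_le ht.1, ht.2.trans_lt hb⟩
  have hsubr : ∀ r ∈ Icc α β, r ∈ Icc 0 R := fun r hr => ⟨hα.le.trans hr.1, hr.2.trans hβ⟩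
  have hαm : α ∈ Icc 0 R := hsubr α ⟨le_rfl, hαβ⟩
  have hβm : β ∈ Icc 0 R := hsubr β ⟨hαβ, le_rfl⟩
  have sgn : ∀ (f : ℝ → ℝ) (x y : ℝ), x ≤ y → ContinuousOn f (Icc x y) → (∀ z ∈ Icc x y, f z ≠ 0) →
      0 < f x → ∀ z ∈ Icc x y, 0 < f z := by
    intro f x y hxy hf hn hp z hz
    by_contra hc
    push Not at hc
    obtain ⟨c, hc1, hc2⟩ := intermediate_value_Icc' hz.1 (hf.mono (Icc_subset_Icc_right hz.2)) ⟨hc, hp.le⟩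
    exact hn c ⟨hc1.1, hc1.2.trans hz.2⟩ hc2
  have main : ∀ {U : ℝ × ℝ → ℝ}, Sol m R t1 t2 B U → (∀ r ∈ Icc α β, U (r, a) ≠ 0) →
      (∀ t ∈ Icc a b, U (α, t) ≠ 0) → (∀ t ∈ Icc a b, U (β, t) ≠ 0) → 0 < U (α, a) →
      ∀ r ∈ Icc α β, 0 < U (r, b) := by
    intro U D hs h1 h2 hp r hr
    have p3 := sgn _ α β hαβ ((D.sV.cont_r (hsub a ⟨le_rfl, hab⟩)).mono hsubr) hs hp
    have p1 := sgn _ a b hab (fun t ht => (D.cont_t hαm (hsub t ht)).continuousWithinAt) h1 hp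
    have p2 := sgn _ a b hab (fun t ht => (D.cont_t hβm (hsub t ht)).continuousWithinAt) h2
      (p3 β ⟨hαβ, le_rfl⟩)
    exact D.wnP ha hb hab hα hαβ hβ p3 p1 p2 r hr b ⟨hab, le_rfl⟩
  intro r hr
  rcases lt_or_gt_of_ne (hs α ⟨le_rfl, hαβ⟩) with hlt | hgt
  · have := main D.neg (fun r hr => neg_ne_zero.2 (hs r hr)) (fun r hr => neg_ne_zero.2 (h1 r hr))
      (fun r hr => neg_ne_zero.2 (h2 r hr)) (by simpa using hlt) r hr
    intro h0
    rw [h0] at this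
    simp at this
  · exact (main D hs h1 h2 hgt r hr).ne'

end Sol
end maxp

section cnt
open Topology

def Side (V : ℝ × ℝ → ℝ) (a b α : ℝ) : Prop :=
  (∀ τ ∈ Icc a b, V (α, τ) = 0) ∨ (∀ τ ∈ Icc a b, V (α, τ) ≠ 0)

lemma Side.mono {V : ℝ × ℝ → ℝ} {a b a' b' α : ℝ} (h : Side V a b α) (ha : a ≤ a') (hb : b' ≤ b) :
    Side V a' b' α := by
  rcases h with h | h
  · exact Or.inl fun τ hτ => h τ ⟨ha.trans hτ.1, hτ.2.trans hb⟩
  · exact Or.inr fun τ hτ => h τ ⟨ha.trans hτ.1, hτ.2.trans hb⟩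

namespace Sol
variable {m : ℕ} {R t1 t2 : ℝ} {B V : ℝ × ℝ → ℝ}

lemma persist (D : Sol m R t1 t2 B V) {a b α β : ℝ} (ha : t1 < a) (hb : b < t2) (hab : a ≤ b)
    (hα : 0 ≤ α) (hβ : β ≤ R) (h1 : Side V a b α) (h2 : Side V a b β)
    {y : ℝ} (hy : y ∈ Icc α β) (hy0 : V (y, b) = 0) : ∃ x ∈ Icc α β, V (x, a) = 0 := by
  have hαβ : α ≤ β := hy.1.trans hy.2
  by_contra hc
  push Not at hc
  have haa : a ∈ Icc a b := ⟨le_rfl, hab⟩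
  have h1' : ∀ τ ∈ Icc a b, V (α, τ) ≠ 0 := by
    rcases h1 with h | h
    · exact absurd (h a haa) (hc α ⟨le_rfl, hαβ⟩)
    · exact h
  have h2' : ∀ τ ∈ Icc a b, V (β, τ) ≠ 0 := by
    rcases h2 with h | h
    · exact absurd (h a haa) (hc β ⟨hαβ, le_rfl⟩)
    · exact h
  have hα' : 0 < α := by
    refine lt_of_le_of_ne hα ?_
    rintro rfl
    exact h1' a haa (D.z0 a ⟨ha, hab.trans_lt hb⟩)
  exact D.wn ha hb hab hα' hαβ hβ hc h1' h2' y hy hy0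

lemma one (D : Sol m R t1 t2 B V) {a b α β : ℝ} (ha : t1 < a) (hb : b < t2) (hab : a ≤ b)
    (hα : 0 ≤ α) (hβ : β ≤ R) (h1 : Side V a b α) (h2 : Side V a b β)
    (hone : ∀ x ∈ Icc α β, ∀ y ∈ Icc α β, V (x, a) = 0 → V (y, a) = 0 → x = y)
    {x y : ℝ} (hx : x ∈ Icc α β) (hy : y ∈ Icc α β) (hx0 : V (x, b) = 0) (hy0 : V (y, b) = 0) :
    ∀ r ∈ Icc x y, V (r, b) = 0 := by
  have hsub : ∀ t ∈ Icc a b, t ∈ Ioo t1 t2 := fun t ht => ⟨ha.trans_le ht.1, ht.2.trans_lt hb⟩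
  have hsubr : ∀ r ∈ Icc α β, r ∈ Icc 0 R := fun r hr => ⟨hα.trans hr.1, hr.2.trans hβ⟩
  set box : Set (ℝ × ℝ × ℝ × ℝ) := Icc α β ×ˢ Icc α β ×ˢ Icc α β ×ˢ Icc a b with hbox
  have hboxc : IsCompact box :=
    isCompact_Icc.prod (isCompact_Icc.prod (isCompact_Icc.prod isCompact_Icc))
  set F : ℝ × ℝ × ℝ × ℝ → ℝ × ℝ := fun q => (V (q.1, q.2.2.2), V (q.2.2.1, q.2.2.2)) with hF
  have hFc : ContinuousOn F box := by
    refine ContinuousOn.prodMk ?_ ?_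
    · refine D.sV.cont.comp (f := fun q : ℝ × ℝ × ℝ × ℝ => (q.1, q.2.2.2)) (by fun_prop) ?_
      rintro q ⟨hq1, hq2, hq3, hq4⟩
      exact ⟨hsubr _ hq1, hsub _ hq4⟩
    · refine D.sV.cont.comp (f := fun q : ℝ × ℝ × ℝ × ℝ => (q.2.2.1, q.2.2.2)) (by fun_prop) ?_
      rintro q ⟨hq1, hq2, hq3, hq4⟩
      exact ⟨hsubr _ hq3, hsub _ hq4⟩
  have hK1 : IsClosed (box ∩ F ⁻¹' {(0, 0)}) :=
    hFc.preimage_isClosed_of_isClosed hboxc.isClosed isClosed_singleton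
  have hK2 : IsClosed {q : ℝ × ℝ × ℝ × ℝ | q.1 ≤ q.2.1 ∧ q.2.1 ≤ q.2.2.1} := by
    rw [setOf_and]
    exact (isClosed_le (by fun_prop) (by fun_prop)).inter (isClosed_le (by fun_prop) (by fun_prop))
  set K := (box ∩ F ⁻¹' {(0, 0)}) ∩ {q : ℝ × ℝ × ℝ × ℝ | q.1 ≤ q.2.1 ∧ q.2.1 ≤ q.2.2.1} with hK
  have hKc : IsCompact K :=
    hboxc.of_isClosed_subset (hK1.inter hK2) (fun q hq => hq.1.1)
  set E := (fun q : ℝ × ℝ × ℝ × ℝ => (q.2.1, q.2.2.2)) '' K with hE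
  have hEc : IsCompact E := hKc.image (by fun_prop)
  have memE : ∀ r t, (r, t) ∈ E ↔ t ∈ Icc a b ∧ ∃ x y, x ∈ Icc α β ∧ y ∈ Icc α β ∧ x ≤ r ∧ r ≤ y ∧
      V (x, t) = 0 ∧ V (y, t) = 0 := by
    intro r t
    constructor
    · rintro ⟨⟨x, r', y, t'⟩, ⟨⟨⟨q1, q2, q3, q4⟩, q5⟩, q6, q7⟩, q8⟩
      simp only [hF, mem_preimage, mem_singleton_iff, Prod.mk.injEq] at q1 q3 q4 q5 q6 q7 q8
      obtain ⟨rfl, rfl⟩ := q8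
      exact ⟨q4, x, y, q1, q3, q6, q7, q5.1, q5.2⟩
    · rintro ⟨ht, x, y, hx, hy, hxr, hry, e1, e2⟩
      exact ⟨(x, r, y, t), ⟨⟨⟨hx, ⟨hx.1.trans hxr, hry.trans hy.2⟩, hy, ht⟩, by simp [hF, e1, e2]⟩,
        hxr, hry⟩, rfl⟩
  have key := D.eqz ha hb hEc (by
    rintro ⟨r, t⟩ hrt
    obtain ⟨ht, x, y, hx, hy, hxr, hry, -, -⟩ := (memE r t).1 hrt
    exact ⟨⟨hα.trans (hx.1.trans hxr), hry.trans (hy.2.trans hβ)⟩, ht⟩) ?_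
  · intro r hr
    exact key (r, b) ((memE r b).2 ⟨⟨hab, le_rfl⟩, x, y, hx, hy, hr.1, hr.2, hx0, hy0⟩)
  intro r t hrt hn
  obtain ⟨ht, x, y, hx, hy, hxr, hry, e1, e2⟩ := (memE r t).1 hrt
  have hxr' : x < r := lt_of_le_of_ne hxr (by rintro rfl; exact hn e1)
  have hry' : r < y := lt_of_le_of_ne hry (by rintro rfl; exact hn e2)
  have hta : a < t := by
    refine lt_of_le_of_ne ht.1 ?_
    rintro rfl
    have := hone x hx y hy e1 e2
    linarith
  have hrm : r ∈ Icc 0 R := ⟨hα.trans (hx.1.trans hxr), hry.trans (hy.2.trans hβ)⟩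
  refine ⟨hry'.trans_le (hy.2.trans hβ), ?_, ?_⟩
  · filter_upwards [Icc_mem_nhds hxr' hry'] with z hz
    exact (memE z t).2 ⟨ht, x, y, hx, hy, hz.1, hz.2, e1, e2⟩
  have hev : ∀ᶠ τ in 𝓝 t, V (r, τ) ≠ 0 := (D.cont_t hrm (hsub t ht)).eventually_ne hn
  obtain ⟨δ, hδ, hball⟩ := Metric.eventually_nhds_iff.1 hev
  have hmx : max a (t - δ) < t := max_lt hta (by linarith)
  filter_upwards [Ioo_mem_nhdsLT hmx] with τ hτ
  have hτa : a < τ := (le_max_left _ _).trans_lt hτ.1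
  have hτδ : t - δ < τ := (le_max_right _ _).trans_lt hτ.1
  have hτt : τ < t := hτ.2
  have hsr : Side V τ t r := Or.inr fun σ hσ => hball (by
    rw [Real.dist_eq, abs_lt]; constructor <;> linarith [hσ.1, hσ.2])
  obtain ⟨x', hx', ex⟩ := D.persist (ha.trans hτa) (ht.2.trans_lt hb) hτt.le hα hrm.2
    (h1.mono hτa.le ht.2) hsr ⟨hx.1, hxr⟩ e1
  obtain ⟨y', hy', ey⟩ := D.persist (ha.trans hτa) (ht.2.trans_lt hb) hτt.le hrm.1 hβ
    hsr (h2.mono hτa.le ht.2) ⟨hry, hy.2⟩ e2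
  exact (memE r τ).2 ⟨⟨hτa.le, hτt.le.trans ht.2⟩, x', y', ⟨hx'.1, hx'.2.trans (hry.trans hy.2)⟩,
    ⟨hx.1.trans (hxr.trans hy'.1), hy'.2⟩, hx'.2, hy'.1, ex, ey⟩

end Sol
end cnt

section cnt2
open Topology

def ZZ (V : ℝ × ℝ → ℝ) (R t : ℝ) : Set ℝ := {r ∈ Icc (0 : ℝ) R | V (r, t) = 0}

lemma ev_Icc {P : ℝ → Prop} {s : ℝ} (h : ∀ᶠ τ in 𝓝 s, P τ) :
    ∀ᶠ δ in 𝓝[>] (0 : ℝ), ∀ τ ∈ Icc (s - δ) (s + δ), P τ := by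
  obtain ⟨ε, hε, hb⟩ := Metric.eventually_nhds_iff.1 h
  filter_upwards [Ioo_mem_nhdsGT hε] with δ hδ τ hτ
  refine hb ?_
  rw [Real.dist_eq, abs_lt]
  constructor <;> linarith [hτ.1, hτ.2, hδ.1, hδ.2]

namespace Sol
variable {m : ℕ} {R t1 t2 : ℝ} {B V : ℝ × ℝ → ℝ}

lemma ev_side (D : Sol m R t1 t2 B V) {s p : ℝ} (hs : s ∈ Ioo t1 t2) (hp : p ∈ Icc 0 R)
    (h : (∀ t ∈ Ioo t1 t2, V (p, t) = 0) ∨ V (p, s) ≠ 0) :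
    ∀ᶠ δ in 𝓝[>] (0 : ℝ), Side V (s - δ) (s + δ) p := by
  rcases h with h | h
  · filter_upwards [ev_Icc (isOpen_Ioo.mem_nhds hs)] with δ hδ
    exact Or.inl fun τ hτ => h τ (hδ τ hτ)
  · filter_upwards [ev_Icc ((D.cont_t hp hs).eventually_ne h)] with δ hδ
    exact Or.inr hδ

lemma sep (D : Sol m R t1 t2 B V) {s : ℝ} (hs : s ∈ Ioo t1 t2)
    (hbc : (∀ t ∈ Ioo t1 t2, V (R, t) = 0) ∨ (∀ t ∈ Ioo t1 t2, V (R, t) ≠ 0))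
    (hfin : (ZZ V R s).Finite) :
    ∃ η > 0, ∃ δ > 0, (∀ τ ∈ Icc (s - δ) (s + δ), τ ∈ Ioo t1 t2) ∧
      (∀ x ∈ ZZ V R s, ∀ y ∈ ZZ V R s, x ≠ y → 2 * η < |x - y|) ∧
      (∀ z ∈ ZZ V R s, Side V (s - δ) (s + δ) (max 0 (z - η)) ∧ Side V (s - δ) (s + δ) (min R (z + η))) ∧
      (∀ τ ∈ Icc (s - δ) (s + δ), ∀ r ∈ ZZ V R τ, ∃ z ∈ ZZ V R s, |r - z| < η) := by
  have hη : ∀ᶠ η in 𝓝[>] (0 : ℝ), ∀ x ∈ ZZ V R s, ∀ y ∈ ZZ V R s, x ≠ y → 2 * η < |x - y| := by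
    refine hfin.eventually_all.2 fun x hx => hfin.eventually_all.2 fun y hy => ?_
    by_cases hxy : x = y
    · exact Eventually.of_forall fun η h => absurd hxy h
    · have : 0 < |x - y| / 2 := by
        have := abs_pos.2 (sub_ne_zero.2 hxy); linarith
      filter_upwards [Ioo_mem_nhdsGT this] with η hη _
      linarith [hη.2]
  obtain ⟨η, hη1, hη0⟩ := (hη.and self_mem_nhdsWithin).exists
  have hη0 : 0 < η := hη0
  have near : ∀ z ∈ ZZ V R s, ∀ p ∈ Icc 0 R, |p - z| = η → V (p, s) ≠ 0 := by
    intro z hz p hp he h0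
    have hpz : p ≠ z := by
      rintro rfl; simp at he; linarith
    have := hη1 p ⟨hp, h0⟩ z hz hpz
    linarith
  have hside : ∀ᶠ δ in 𝓝[>] (0 : ℝ), ∀ z ∈ ZZ V R s,
      Side V (s - δ) (s + δ) (max 0 (z - η)) ∧ Side V (s - δ) (s + δ) (min R (z + η)) := by
    refine hfin.eventually_all.2 fun z hz => ?_
    have hz1 := hz.1.1
    have hz2 := hz.1.2
    refine Eventually.and ?_ ?_
    · refine D.ev_side hs ⟨le_max_left _ _, max_le D.hR.le (by linarith)⟩ ?_
      rcases le_total (z - η) 0 with h | h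
      · rw [max_eq_left h]; exact Or.inl D.z0
      · rw [max_eq_right h]
        refine Or.inr (near z hz _ ⟨h, by linarith⟩ ?_)
        rw [sub_sub_cancel_left, abs_neg, abs_of_pos hη0]
    · refine D.ev_side hs ⟨le_min D.hR.le (by linarith), min_le_left _ _⟩ ?_
      rcases le_total R (z + η) with h | h
      · rw [min_eq_left h]
        exact hbc.imp id (fun h => h s hs)
      · rw [min_eq_right h]
        refine Or.inr (near z hz _ ⟨by linarith, h⟩ ?_)
        rw [add_sub_cancel_left, abs_of_pos hη0]
  have hcomp : IsCompact (Icc 0 R ∩ ⋂ z ∈ ZZ V R s, {r : ℝ | η ≤ |r - z|}) :=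
    isCompact_Icc.inter_right (isClosed_biInter fun z _ => isClosed_le (by fun_prop) (by fun_prop))
  have hK : ∀ᶠ τ in 𝓝 s, ∀ r ∈ Icc 0 R ∩ ⋂ z ∈ ZZ V R s, {r : ℝ | η ≤ |r - z|},
      τ ∈ Ioo t1 t2 → V (r, τ) ≠ 0 ∨ r ∉ Icc 0 R := by
    refine hcomp.eventually_forall_of_forall_eventually ?_
    rintro r ⟨hr, hr2⟩
    have hr0 : V (r, s) ≠ 0 := by
      intro h0
      have := mem_iInter₂.1 hr2 r ⟨hr, h0⟩
      simp at this
      linarith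
    have hc := D.sV.cont (r, s) ⟨hr, hs⟩
    have h1 : ∀ᶠ q in 𝓝[SS R t1 t2] (r, s), V q ≠ 0 := hc.eventually_ne hr0
    have h2 := eventually_nhdsWithin_iff.1 h1
    have h3 : Tendsto (fun z : ℝ × ℝ => (z.2, z.1)) (𝓝 (s, r)) (𝓝 (r, s)) :=
      (by fun_prop : Continuous (fun z : ℝ × ℝ => (z.2, z.1))).tendsto (s, r)
    filter_upwards [h3.eventually h2] with q hq hq1
    by_cases hm : q.2 ∈ Icc 0 R
    · exact Or.inl (hq ⟨hm, hq1⟩)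
    · exact Or.inr hm
  obtain ⟨δ, ⟨⟨hd1, hd2⟩, hd3⟩, hd0⟩ :=
    (((hside.and (ev_Icc hK)).and (ev_Icc (isOpen_Ioo.mem_nhds hs))).and self_mem_nhdsWithin).exists
  refine ⟨η, hη0, δ, hd0, hd3, hη1, hd1, ?_⟩
  intro τ hτ r hr
  by_contra hc
  push Not at hc
  rcases hd2 τ hτ r ⟨hr.1, mem_iInter₂.2 hc⟩ (hd3 τ hτ) with h | h
  · exact h hr.2
  · exact h hr.1

lemma loc (D : Sol m R t1 t2 B V) {s : ℝ} (hs : s ∈ Ioo t1 t2)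
    (hbc : (∀ t ∈ Ioo t1 t2, V (R, t) = 0) ∨ (∀ t ∈ Ioo t1 t2, V (R, t) ≠ 0))
    (hfin : (ZZ V R s).Finite) :
    ∃ δ > 0, (∀ t ∈ Icc s (s + δ), (ZZ V R t).Finite → (ZZ V R t).ncard ≤ (ZZ V R s).ncard) ∧
      (∀ t ∈ Icc (s - δ) s, (ZZ V R t).Finite → (ZZ V R s).ncard ≤ (ZZ V R t).ncard) := by
  obtain ⟨η, hη, δ, hδ, hI, hsep, hside, hnear⟩ := D.sep hs hbc hfin
  refine ⟨δ, hδ, ?_, ?_⟩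
  · intro t ht hft
    have ht' : t ∈ Icc (s - δ) (s + δ) := ⟨by linarith [ht.1], ht.2⟩
    have hn := hnear t ht'
    choose! f hf1 hf2 using hn
    refine ncard_le_ncard_of_injOn f hf1 ?_ hfin
    have main : ∀ x ∈ ZZ V R t, ∀ y ∈ ZZ V R t, f x = f y → ¬ x < y := by
      intro x hx y hy hxy hlt
      have hz := hf1 x hx
      have k1 := abs_lt.1 (hf2 x hx)
      have k2 := abs_lt.1 (hf2 y hy)
      rw [← hxy] at k2
      set z := f x with hzdef
      have hx1 := hx.1.1
      have hx2 := hx.1.2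
      have hy1 := hy.1.1
      have hy2 := hy.1.2
      have := D.one (a := s) (b := t) (α := max 0 (z - η)) (β := min R (z + η)) (x := x) (y := y)
        hs.1 (hI t ht').2 ht.1 (le_max_left _ _)
        (min_le_left _ _) ((hside z hz).1.mono (by linarith) ht.2) ((hside z hz).2.mono (by linarith) ht.2)
        (by
          have aux : ∀ w ∈ Icc (max 0 (z - η)) (min R (z + η)), V (w, s) = 0 → w = z := by
            intro w hw hw0
            by_contra hne
            have b1 := (max_le_iff.1 hw.1)
            have b2 := (le_min_iff.1 hw.2)
            have := hsep w ⟨⟨b1.1, b2.1⟩, hw0⟩ z hz hne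
            have : |w - z| ≤ η := abs_le.2 ⟨by linarith, by linarith⟩
            linarith
          intro p hp q hq p0 q0
          rw [aux p hp p0, aux q hq q0])
        ⟨max_le hx1 (by linarith), le_min hx2 (by linarith)⟩
        ⟨max_le hy1 (by linarith), le_min hy2 (by linarith)⟩ hx.2 hy.2
      exact (Icc_infinite hlt) (hft.subset fun r hr => ⟨⟨hx1.trans hr.1, hr.2.trans hy2⟩, this r hr⟩)
    intro x hx y hy hxy
    rcases lt_trichotomy x y with h | h | h
    · exact absurd h (main x hx y hy hxy)
    · exact h
    · exact absurd h (main y hy x hx hxy.symm)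
  · intro t ht hft
    have ht' : t ∈ Icc (s - δ) (s + δ) := ⟨ht.1, by linarith [ht.2]⟩
    have hn : ∀ z ∈ ZZ V R s, ∃ x ∈ Icc (max 0 (z - η)) (min R (z + η)), V (x, t) = 0 := by
      intro z hz
      exact D.persist (hI t ht').1 hs.2 ht.2 (le_max_left _ _) (min_le_left _ _)
        ((hside z hz).1.mono ht.1 (by linarith)) ((hside z hz).2.mono ht.1 (by linarith))
        ⟨max_le hz.1.1 (by linarith), le_min hz.1.2 (by linarith)⟩ hz.2
    choose! f hf1 hf2 using hn
    refine ncard_le_ncard_of_injOn f (fun z hz => ?_) ?_ hft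
    · have b1 := (max_le_iff.1 (hf1 z hz).1)
      have b2 := (le_min_iff.1 (hf1 z hz).2)
      exact ⟨⟨b1.1, b2.1⟩, hf2 z hz⟩
    · intro z hz w hw hzw
      by_contra hne
      have b1 := (max_le_iff.1 (hf1 z hz).1)
      have b2 := (le_min_iff.1 (hf1 z hz).2)
      have c1 := (max_le_iff.1 (hf1 w hw).1)
      have c2 := (le_min_iff.1 (hf1 w hw).2)
      have := hsep z hz w hw hne
      have : |z - w| ≤ 2 * η := abs_le.2 ⟨by linarith, by linarith⟩
      linarith

lemma fin (D : Sol m R t1 t2 B V) {s t : ℝ} (hs : s ∈ Ioo t1 t2) (ht : t ∈ Ioo t1 t2) (hst : s ≤ t)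
    (hbc : (∀ t ∈ Ioo t1 t2, V (R, t) = 0) ∨ (∀ t ∈ Ioo t1 t2, V (R, t) ≠ 0))
    (hfin : (ZZ V R t).Finite) : (ZZ V R s).Finite := by
  by_contra hinf
  obtain ⟨r0, hr0, hacc⟩ := Set.Infinite.exists_accPt_of_subset_isCompact hinf
    (isCompact_Icc : IsCompact (Icc (0:ℝ) R)) (fun r hr => hr.1)
  have hA : AccZ R r0 s V := by
    intro ε hε
    obtain ⟨y, ⟨hy1, hy2⟩, hy3⟩ := accPt_iff_nhds.1 hacc _ (Metric.ball_mem_nhds r0 hε)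
    exact ⟨y, hy2.1, hy3, by simpa [Real.dist_eq] using hy1, hy2.2⟩
  rcases hbc with h | h
  · refine D.noAccD hs hr0 hA h fun τ hτ => ?_
    by_contra hc
    push Not at hc
    have := D.fwd hτ.1 ht.2 (hτ.2.le.trans hst) h hc
    exact Icc_infinite D.hR (hfin.subset fun r hr => ⟨hr, this r hr⟩)
  · exact D.noAccN hs hr0 hA h

lemma mono (D : Sol m R t1 t2 B V) {s t : ℝ} (hs : s ∈ Ioo t1 t2) (ht : t ∈ Ioo t1 t2) (hst : s ≤ t)
    (hbc : (∀ t ∈ Ioo t1 t2, V (R, t) = 0) ∨ (∀ t ∈ Ioo t1 t2, V (R, t) ≠ 0)) :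
    (ZZ V R t).ncard ≤ (ZZ V R s).ncard := by
  by_cases hfin : (ZZ V R t).Finite
  swap
  · rw [Set.Infinite.ncard hfin]; exact Nat.zero_le _
  have hsub : ∀ τ ∈ Icc s t, τ ∈ Ioo t1 t2 := fun τ hτ => ⟨hs.1.trans_le hτ.1, hτ.2.trans_lt ht.2⟩
  have hf : ∀ τ ∈ Icc s t, (ZZ V R τ).Finite := fun τ hτ => D.fin (hsub τ hτ) ht hτ.2 hbc hfin
  set A := {x ∈ Icc s t | ∀ y ∈ Icc s x, (ZZ V R y).ncard ≤ (ZZ V R s).ncard} with hA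
  have hsA : s ∈ A := ⟨⟨le_rfl, hst⟩, fun y hy => by rw [le_antisymm hy.2 hy.1]⟩
  have hbdd : BddAbove A := ⟨t, fun x hx => hx.1.2⟩
  set c := sSup A with hc
  have hsc : s ≤ c := le_csSup hbdd hsA
  have hct : c ≤ t := csSup_le ⟨s, hsA⟩ fun x hx => hx.1.2
  obtain ⟨δ, hδ, h1, h2⟩ := D.loc (hsub c ⟨hsc, hct⟩) hbc (hf c ⟨hsc, hct⟩)
  obtain ⟨x, hxA, hx⟩ := exists_lt_of_lt_csSup ⟨s, hsA⟩ (show c - δ < sSup A by linarith)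
  have hxc : x ≤ c := le_csSup hbdd hxA
  have hcle : (ZZ V R c).ncard ≤ (ZZ V R s).ncard :=
    (h2 x ⟨hx.le, hxc⟩ (hf x hxA.1)).trans (hxA.2 x ⟨hxA.1.1, le_rfl⟩)
  have all : ∀ y ∈ Icc s (min t (c + δ)), (ZZ V R y).ncard ≤ (ZZ V R s).ncard := by
    intro y hy
    have hyt : y ≤ t := hy.2.trans (min_le_left _ _)
    have hyd : y ≤ c + δ := hy.2.trans (min_le_right _ _)
    rcases lt_or_ge y c with h | h
    · obtain ⟨x', hx'A, hx'⟩ := exists_lt_of_lt_csSup ⟨s, hsA⟩ h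
      exact hx'A.2 y ⟨hy.1, hx'.le⟩
    · exact (h1 y ⟨h, hyd⟩ (hf y ⟨hy.1, hyt⟩)).trans hcle
  have hm : min t (c + δ) ∈ A := ⟨⟨le_min hst (by linarith), min_le_left _ _⟩, all⟩
  have hmc := le_csSup hbdd hm
  have htm : t ≤ c + δ := by
    by_contra hlt
    push Not at hlt
    rw [min_eq_right hlt.le] at hmc
    linarith
  exact all t ⟨hst, le_min le_rfl htm⟩

end Sol

lemma bridge {m : ℕ} (hm : 2 ≤ m) {R t1 t2 : ℝ} (hR : 0 < R) {b v : ℝ → ℝ → ℝ}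
    (hb : Sm (SS R t1 t2) (fun p : ℝ × ℝ => b p.1 p.2))
    (hb0 : ∀ t ∈ Ioo t1 t2, b 0 t = (m : ℝ) - 1)
    (hv : Sm (SS R t1 t2) (fun p : ℝ × ℝ => v p.1 p.2))
    (hpde : ∀ r ∈ Ioo (0:ℝ) R, ∀ t ∈ Ioo t1 t2,
      deriv (fun s => v r s) t =
        deriv (deriv (fun x => v x t)) r + (((m : ℝ) - 1) / r) * deriv (fun x => v x t) r
          - (b r t / r ^ 2) * v r t) :
    Sol m R t1 t2 (fun p : ℝ × ℝ => b p.1 p.2) (fun p : ℝ × ℝ => v p.1 p.2) := by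
  refine ⟨hm, hR, hb, hv, hb0, ?_⟩
  set V := (fun p : ℝ × ℝ => v p.1 p.2) with hV
  set B := (fun p : ℝ × ℝ => b p.1 p.2) with hB
  have c1 := (hv.dt hR).cont
  have c2 := (hv.dr hR).cont
  have c3 := ((hv.dr hR).dr hR).cont
  have c4 := hv.cont
  have c5 := hb.cont
  rintro ⟨r, t⟩ ⟨hr, ht⟩
  have hms : ∀ g : ℝ × ℝ → ℝ, ContinuousOn g (SS R t1 t2) → ContinuousOn (fun x => g (x, t)) (Icc 0 R) := by
    intro g hg
    exact hg.comp (f := fun x : ℝ => (x, t)) (by fun_prop) (fun x hx => ⟨hx, ht⟩)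
  have d1 := hms _ c1
  have d2 := hms _ c2
  have d3 := hms _ c3
  have d4 := hms _ c4
  have d5 := hms _ c5
  have heq : EqOn (fun x => x ^ 2 * Dt (SS R t1 t2) V (x, t))
      (fun x => x ^ 2 * Dr (SS R t1 t2) (Dr (SS R t1 t2) V) (x, t)
        + ((m : ℝ) - 1) * x * Dr (SS R t1 t2) V (x, t) - B (x, t) * V (x, t)) (Ioo 0 R) := by
    intro x hx
    have hxp := hx.1
    have e1 : deriv (fun s => v x s) t = Dt (SS R t1 t2) V (x, t) :=
      (hv.hasDt (Ioo_subset_Icc_self hx) ht).deriv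
    have e2 : ∀ y ∈ Ioo 0 R, deriv (fun x => v x t) y = Dr (SS R t1 t2) V (y, t) :=
      fun y hy => (hv.hasDr hy ht).deriv
    have e3 : deriv (deriv (fun x => v x t)) x = Dr (SS R t1 t2) (Dr (SS R t1 t2) V) (x, t) := by
      rw [Filter.EventuallyEq.deriv_eq (f := fun y => Dr (SS R t1 t2) V (y, t))
        (by filter_upwards [isOpen_Ioo.mem_nhds hx] with y hy using e2 y hy)]
      exact ((hv.dr hR).hasDr hx ht).deriv
    have := hpde x hx t ht
    rw [e1, e2 x hx, e3] at this
    simp only [hV, hB] at this ⊢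
    rw [this]
    field_simp
  have := heq.of_subset_closure (t := Icc 0 R) (ContinuousOn.mul (by fun_prop) d1)
    (((ContinuousOn.mul (by fun_prop) d3).add (ContinuousOn.mul (by fun_prop) d2)).sub (d5.mul d4)) Ioo_subset_Icc_self
    (by rw [closure_Ioo hR.ne])
  exact this hr

end cnt2

theorem zero_number_monotone
    (m : ℕ) (hm : 2 ≤ m) (R t1 t2 : ℝ) (hR : 0 < R) (ht12 : t1 < t2)
    (b v : ℝ → ℝ → ℝ)
    (hb_smooth : ContDiffOn ℝ (⊤ : ℕ∞) (fun p : ℝ × ℝ => b p.1 p.2) (Icc 0 R ×ˢ Ioo t1 t2))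
    (hb_bdd : ∃ C : ℝ, ∀ r ∈ Icc (0:ℝ) R, ∀ t ∈ Ioo t1 t2, |b r t| ≤ C)
    (hb0 : ∀ t ∈ Ioo t1 t2, b 0 t = (m : ℝ) - 1)
    (hbr0 : ∀ t ∈ Ioo t1 t2, deriv (fun x => b x t) 0 = 0)
    (hv_smooth : ContDiffOn ℝ (⊤ : ℕ∞) (fun p : ℝ × ℝ => v p.1 p.2) (Icc 0 R ×ˢ Ioo t1 t2))
    (hpde : ∀ r ∈ Ioo (0:ℝ) R, ∀ t ∈ Ioo t1 t2,
      deriv (fun s => v r s) t =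
        deriv (deriv (fun x => v x t)) r + (((m : ℝ) - 1) / r) * deriv (fun x => v x t) r
          - (b r t / r ^ 2) * v r t)
    (hbc0 : (∀ t ∈ Ioo t1 t2, v 0 t = 0) ∨ (∀ t ∈ Ioo t1 t2, v 0 t ≠ 0))
    (hbcR : (∀ t ∈ Ioo t1 t2, v R t = 0) ∨ (∀ t ∈ Ioo t1 t2, v R t ≠ 0))
    (hnz : ¬ ∀ r ∈ Icc (0:ℝ) R, ∀ t ∈ Ioo t1 t2, v r t = 0)
    :
    ∀ s ∈ Ioo t1 t2, ∀ t ∈ Ioo t1 t2, s ≤ t →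
      {r ∈ Icc (0:ℝ) R | v r t = 0}.ncard ≤ {r ∈ Icc (0:ℝ) R | v r s = 0}.ncard := by
  intro s hs t ht hst
  exact (bridge hm hR hb_smooth hb0 hv_smooth hpde).mono hs ht hst hbcR
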